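/- arXiv:1904.03533 — 3 statements merged into one kernel-verified Lean document; each statement's English description precedes it below -/
import Mathlib

section
/- (Alon–Boppana) For every integer k ≥ 3 and every ε > 0 there exists N such that every finite connected k-regular graph X with more than N vertices has an adjacency eigenvalue λ with λ ≠ k and λ > 2√(k−1) − ε. -/
open Matrix

/-- The spherical function of the `(t² + 1)`-regular tree at the spectral edge `2t`, multiplied
by the linear cutoff `R - i`. -/
noncomputable def radialProfile (t : ℝ) (R i : ℕ) : ℝ :=
  (t ^ 2 + 1 + (t ^ 2 - 1) * i) * ((R - i : ℕ) : ℝ) / t ^ i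

lemma radialProfile_nonneg {t : ℝ} (ht : 1 ≤ t) (R i : ℕ) : 0 ≤ radialProfile t R i := by
  have h : 0 ≤ t ^ 2 - 1 := by nlinarith
  have h0 : 0 < t := by linarith
  unfold radialProfile
  positivity

lemma radialProfile_eq_zero (t : ℝ) {R i : ℕ} (h : R ≤ i) : radialProfile t R i = 0 := by
  simp [radialProfile, Nat.sub_eq_zero_of_le h]

lemma radialProfile_zero_pos (t : ℝ) {R : ℕ} (hR : 0 < R) : 0 < radialProfile t R 0 := by
  simp only [radialProfile, Nat.cast_zero, Nat.sub_zero, pow_zero, mul_zero, add_zero]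
  positivity

lemma radialProfile_antitone {t : ℝ} (ht : 1 ≤ t) (R : ℕ) : Antitone (radialProfile t R) := by
  refine antitone_nat_of_succ_le fun i ↦ ?_
  have h : 0 ≤ t ^ 2 - 1 := by nlinarith
  have h0 : 0 < t := by linarith
  have hi : (0 : ℝ) ≤ i := i.cast_nonneg
  have hsub : ((R - (i + 1) : ℕ) : ℝ) ≤ ((R - i : ℕ) : ℝ) := by
    exact_mod_cast (by omega : R - (i + 1) ≤ R - i)
  have hlin : t ^ 2 + 1 + (t ^ 2 - 1) * ((i + 1 : ℕ) : ℝ) ≤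
      (t ^ 2 + 1 + (t ^ 2 - 1) * i) * t := by
    push_cast
    nlinarith [mul_nonneg h0.le (sq_nonneg (t - 1)),
      mul_nonneg (mul_nonneg (sub_nonneg.2 ht) h) hi]
  unfold radialProfile
  rw [div_le_div_iff₀ (by positivity) (by positivity), pow_succ' t i]
  calc _ ≤ ((t ^ 2 + 1 + (t ^ 2 - 1) * i) * t * ((R - i : ℕ) : ℝ)) * t ^ i := by gcongr
    _ = _ := by ring

lemma radialProfile_zero_step {t : ℝ} (ht : 1 ≤ t) {R : ℕ} (hR : 0 < R) :
    2 * t * (1 - 1 / R) * radialProfile t R 0 ≤ (t ^ 2 + 1) * radialProfile t R 1 := by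
  have h0 : t ≠ 0 := by linarith
  have hR' : (R : ℝ) ≠ 0 := by positivity
  unfold radialProfile
  rw [Nat.cast_sub (show 1 ≤ R from hR)]
  refine le_of_eq ?_
  push_cast
  simp only [Nat.sub_zero]
  field_simp
  ring

lemma radialProfile_step {t : ℝ} (ht : 1 ≤ t) (R i : ℕ) :
    2 * t * (1 - 1 / R) * radialProfile t R (i + 1) ≤
      radialProfile t R i + t ^ 2 * radialProfile t R (i + 2) := by
  rcases le_or_gt R (i + 1) with hi | hi
  · rw [radialProfile_eq_zero t hi, mul_zero]
    have := radialProfile_nonneg ht R i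
    have := radialProfile_nonneg ht R (i + 2)
    positivity
  obtain ⟨d, rfl⟩ := Nat.exists_eq_add_of_lt hi
  have h : 0 ≤ t ^ 2 - 1 := by nlinarith
  have h0 : 0 < t := by linarith
  unfold radialProfile
  rw [show i + 1 + d + 1 - (i + 1) = d + 1 by omega, show i + 1 + d + 1 - i = d + 2 by omega,
    show i + 1 + d + 1 - (i + 2) = d by omega]
  push_cast
  rw [← sub_nonneg]
  have key : 0 ≤ 2 * (2 * ((d : ℝ) + 1) + (t ^ 2 - 1) * (i + 1) * d) /
      (((i : ℝ) + 1 + d + 1) * t ^ i) := by positivity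
  refine key.trans_eq ?_
  field_simp
  ring

namespace SimpleGraph

variable {V : Type*} {G : SimpleGraph V}

lemma Connected.exists_adj_dist_eq (hG : G.Connected) {v x : V} {i : ℕ}
    (h : G.dist v x = i + 1) : ∃ y, G.Adj x y ∧ G.dist v y = i := by
  obtain ⟨p, hp⟩ := hG.exists_walk_length_eq_dist x v
  rw [dist_comm, h] at hp
  cases p with
  | nil => simp at hp
  | @cons _ y _ hxy p =>
    refine ⟨y, hxy, le_antisymm ?_ ?_⟩
    · rw [dist_comm]
      exact (dist_le p).trans (by simpa using hp.le)
    · have := hG.dist_triangle (u := v) (v := y) (w := x)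
      rw [dist_eq_one_iff_adj.2 hxy.symm] at this
      omega

lemma Connected.dist_le_succ (hG : G.Connected) {v x y : V} (h : G.Adj x y) :
    G.dist v y ≤ G.dist v x + 1 := by
  have := hG.dist_triangle (u := v) (v := x) (w := y)
  rwa [dist_eq_one_iff_adj.2 h] at this

variable [Fintype V] [DecidableEq V] [DecidableRel G.Adj] {k : ℕ}

lemma Connected.card_dist_lt_le (hG : G.Connected) (hk : G.IsRegularOfDegree k) (v : V) (r : ℕ) :
    (Finset.univ.filter fun x ↦ G.dist v x < r + 1).card ≤ (k + 1) ^ r := by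
  induction r with
  | zero =>
    refine Finset.card_le_one.2 fun a ha b hb ↦ ?_
    simp only [Finset.mem_filter, Finset.mem_univ, true_and, zero_add, Nat.lt_one_iff,
      hG.dist_eq_zero_iff] at ha hb
    exact ha.symm.trans hb
  | succ r ih =>
    have hsub : (Finset.univ.filter fun x ↦ G.dist v x < r + 1 + 1) ⊆
        (Finset.univ.filter fun x ↦ G.dist v x < r + 1).biUnion
          fun y ↦ insert y (G.neighborFinset y) := by
      intro x hx
      simp only [Finset.mem_filter, Finset.mem_univ, true_and, Finset.mem_biUnion,
        Finset.mem_insert, mem_neighborFinset] at hx ⊢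
      rcases Nat.lt_succ_iff_lt_or_eq.1 hx with h | h
      · exact ⟨x, h, Or.inl rfl⟩
      · obtain ⟨y, hxy, hy⟩ := hG.exists_adj_dist_eq h
        exact ⟨y, by omega, Or.inr hxy.symm⟩
    refine (Finset.card_le_card hsub).trans <| (Finset.card_biUnion_le_card_mul _ _ (k + 1)
      fun y _ ↦ (Finset.card_insert_le _ _).trans ?_).trans ?_
    · rw [card_neighborFinset_eq_degree, hk y]
    · rw [pow_succ]
      gcongr

/-- A radial profile centred at `v` is a subsolution of the eigenvalue equation. -/
lemma Connected.le_adjMatrix_mulVec_radialProfile (hG : G.Connected)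
    (hk : G.IsRegularOfDegree k) {t : ℝ} (ht : 1 ≤ t) (hkt : (k : ℝ) = t ^ 2 + 1)
    {R : ℕ} (hR : 0 < R) (v x : V) :
    2 * t * (1 - 1 / R) * radialProfile t R (G.dist v x) ≤
      (G.adjMatrix ℝ *ᵥ fun y ↦ radialProfile t R (G.dist v y)) x := by
  have hanti := radialProfile_antitone ht R
  have hcard : (G.neighborFinset x).card = k := by rw [card_neighborFinset_eq_degree, hk x]
  rw [adjMatrix_mulVec_apply]
  rcases h : G.dist v x with _ | i
  · refine (radialProfile_zero_step ht hR).trans ?_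
    rw [← hkt, ← hcard, ← nsmul_eq_mul]
    refine Finset.card_nsmul_le_sum _ _ _ fun y hy ↦ hanti ?_
    simpa [h] using hG.dist_le_succ (v := v) ((mem_neighborFinset _ _ _).1 hy)
  · obtain ⟨y, hxy, hy⟩ := hG.exists_adj_dist_eq h
    have hy' : y ∈ G.neighborFinset x := (mem_neighborFinset _ _ _).2 hxy
    have hcard' : (((G.neighborFinset x).erase y).card : ℝ) = t ^ 2 := by
      rw [Finset.cast_card_erase_of_mem hy', hcard, hkt]
      ring
    refine (radialProfile_step ht R i).trans ?_
    rw [← Finset.add_sum_erase _ _ hy', hy, ← hcard', ← nsmul_eq_mul]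
    gcongr
    refine Finset.card_nsmul_le_sum _ _ _ fun z hz ↦ hanti ?_
    simpa [h] using hG.dist_le_succ (v := v)
      ((mem_neighborFinset _ _ _).1 (Finset.mem_of_mem_erase hz))

/-- An eigenvector for the degree of a connected regular graph is constant. -/
lemma Connected.eq_of_adjMatrix_mulVec_eq (hG : G.Connected) (hk : G.IsRegularOfDegree k)
    {x : V → ℝ} (hx : G.adjMatrix ℝ *ᵥ x = (k : ℝ) • x) (u v : V) : x u = x v := by
  refine (lapMatrix_mulVec_eq_zero_iff_forall_reachable G).1 ?_ u v (hG.preconnected u v)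
  ext w
  rw [lapMatrix_mulVec_apply, ← adjMatrix_mulVec_apply, hx, hk w]
  simp

end SimpleGraph

/-- A symmetric real matrix has an eigenvalue exceeding any strict lower bound for one of its
Rayleigh quotients. -/
lemma Matrix.IsHermitian.exists_eigenvalue_gt {n : Type*} [Fintype n] [DecidableEq n]
    {M : Matrix n n ℝ} (hM : M.IsHermitian) {c : ℝ} {f : n → ℝ}
    (hf : c * (f ⬝ᵥ f) < f ⬝ᵥ (M *ᵥ f)) :
    ∃ (lam : ℝ) (x : n → ℝ), c < lam ∧ x ≠ 0 ∧ M *ᵥ x = lam • x := by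
  have hD : (c • (1 : Matrix n n ℝ) - M).IsHermitian :=
    (isHermitian_one.smul (IsSelfAdjoint.all c)).sub hM
  have hneg : ¬ ∀ i, 0 ≤ hD.eigenvalues i := fun h ↦ by
    have := (hD.posSemidef_iff_eigenvalues_nonneg.2 h).dotProduct_mulVec_nonneg f
    rw [sub_mulVec, smul_mulVec, one_mulVec, dotProduct_sub, dotProduct_smul, star_trivial,
      smul_eq_mul] at this
    linarith
  push Not at hneg
  obtain ⟨i, hi⟩ := hneg
  refine ⟨c - hD.eigenvalues i, hD.eigenvectorBasis i, by linarith, ?_, ?_⟩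
  · intro h
    exact hD.eigenvectorBasis.orthonormal.ne_zero i (by ext j; exact congrFun h j)
  · have := hD.mulVec_eigenvectorBasis i
    rw [sub_mulVec, smul_mulVec, one_mulVec] at this
    rw [sub_smul, ← this, sub_sub_cancel]

/-- For a connected regular graph, a test function whose adjacency Rayleigh quotient exceeds
`c ≥ 0`, even after the contribution of the constants is removed, forces a nontrivial eigenvalue
larger than `c`. -/
lemma SimpleGraph.Connected.exists_eigenvalue_gt {V : Type*} [Fintype V] [DecidableEq V]
    {G : SimpleGraph V} [DecidableRel G.Adj] {k : ℕ} (hG : G.Connected)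
    (hk : G.IsRegularOfDegree k) {c : ℝ} (hc : 0 ≤ c) {f : V → ℝ}
    (hf : c * (f ⬝ᵥ f) <
      f ⬝ᵥ (G.adjMatrix ℝ *ᵥ f) - k / Fintype.card V * (∑ v, f v) ^ 2) :
    ∃ lam : ℝ, (∃ x : V → ℝ, x ≠ 0 ∧ G.adjMatrix ℝ *ᵥ x = lam • x) ∧ lam ≠ k ∧ c < lam := by
  have := hG.nonempty
  set a : ℝ := k / Fintype.card V with ha
  set M : Matrix V V ℝ := G.adjMatrix ℝ - of fun _ _ ↦ a with hMdef
  have hM : M.IsHermitian :=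
    (G.isHermitian_adjMatrix ℝ).sub (by ext; simp)
  have hMx (x : V → ℝ) (v : V) : (M *ᵥ x) v = (G.adjMatrix ℝ *ᵥ x) v - a * ∑ u, x u := by
    rw [hMdef, sub_mulVec, Pi.sub_apply]
    simp [mulVec, dotProduct, Finset.mul_sum]
  obtain ⟨lam, x, hlam, hx0, hx⟩ := hM.exists_eigenvalue_gt (c := c) (f := f) <| by
    refine hf.trans_eq ?_
    simp only [dotProduct, hMx, mul_sub, Finset.sum_sub_distrib, ← Finset.sum_mul]
    ring
  have hsumA : ∑ v, (G.adjMatrix ℝ *ᵥ x) v = k * ∑ v, x v := by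
    have h1 : G.adjMatrix ℝ *ᵥ (fun _ ↦ 1) = fun _ ↦ (k : ℝ) := by
      ext v
      simp [adjMatrix_mulVec_apply, hk v]
    calc _ = (fun _ ↦ 1) ⬝ᵥ (G.adjMatrix ℝ *ᵥ x) := by simp [dotProduct]
      _ = (G.adjMatrix ℝ *ᵥ fun _ ↦ 1) ⬝ᵥ x := by
        rw [dotProduct_mulVec, ← mulVec_transpose, transpose_adjMatrix]
      _ = _ := by rw [h1]; simp [dotProduct, Finset.mul_sum]
  have hsum : ∑ v, x v = 0 := by
    have h : ∑ v, (M *ᵥ x) v = ∑ v, (lam • x) v := by rw [hx]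
    have hcard : (Fintype.card V : ℝ) ≠ 0 := by positivity
    simp only [hMx, Finset.sum_sub_distrib, hsumA, Pi.smul_apply, smul_eq_mul, ← Finset.mul_sum,
      Finset.sum_const, Finset.card_univ, nsmul_eq_mul, ha] at h
    rw [← mul_assoc, div_mul_cancel₀ _ hcard, sub_self] at h
    exact (mul_eq_zero.1 h.symm).resolve_left (by linarith)
  have hAx : G.adjMatrix ℝ *ᵥ x = lam • x := by
    ext v
    simpa [hsum, hx] using (hMx x v).symm
  refine ⟨lam, ⟨x, hx0, hAx⟩, fun h ↦ hx0 ?_, hlam⟩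
  rw [h] at hAx
  ext v
  have hv : ∑ u, x u = Fintype.card V * x v := by
    rw [Finset.sum_congr rfl fun u _ ↦ hG.eq_of_adjMatrix_mulVec_eq hk hAx u v]
    simp
  rw [hsum] at hv
  exact (mul_eq_zero.1 hv.symm).resolve_left (by positivity)

/-- A nontrivial eigenvalue bound at the scale of a ball of radius `R`. -/
lemma SimpleGraph.Connected.exists_eigenvalue_gt_of_ball {V : Type*} [Fintype V] [DecidableEq V]
    {G : SimpleGraph V} [DecidableRel G.Adj] {k : ℕ} (hG : G.Connected)
    (hk : G.IsRegularOfDegree k) {t : ℝ} (ht : 1 ≤ t) (hkt : (k : ℝ) = t ^ 2 + 1) {r : ℕ}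
    {c : ℝ} (hc : 0 ≤ c)
    (h : c < 2 * t * (1 - 1 / (r + 1 : ℕ)) - k * (k + 1) ^ r / Fintype.card V) :
    ∃ lam : ℝ, (∃ x : V → ℝ, x ≠ 0 ∧ G.adjMatrix ℝ *ᵥ x = lam • x) ∧ lam ≠ k ∧ c < lam := by
  obtain ⟨v⟩ := hG.nonempty
  set f : V → ℝ := fun x ↦ radialProfile t (r + 1) (G.dist v x) with hf
  have hf0 : ∀ x, 0 ≤ f x := fun x ↦ radialProfile_nonneg ht _ _
  have hpos : 0 < f ⬝ᵥ f := by
    refine Finset.sum_pos' (fun x _ ↦ mul_nonneg (hf0 x) (hf0 x)) ⟨v, Finset.mem_univ v, ?_⟩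
    have : 0 < f v := by
      simpa [hf] using radialProfile_zero_pos t r.succ_pos
    positivity
  have hA : 2 * t * (1 - 1 / (r + 1 : ℕ)) * (f ⬝ᵥ f) ≤ f ⬝ᵥ (G.adjMatrix ℝ *ᵥ f) := by
    rw [← smul_eq_mul, ← dotProduct_smul]
    exact Finset.sum_le_sum fun x _ ↦ mul_le_mul_of_nonneg_left
      (hG.le_adjMatrix_mulVec_radialProfile hk ht hkt r.succ_pos v x) (hf0 x)
  have hsq : (∑ x, f x) ^ 2 ≤ (k + 1) ^ r * (f ⬝ᵥ f) := by
    set B := Finset.univ.filter fun x ↦ G.dist v x < r + 1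
    have hB : ∑ x, f x = ∑ x ∈ B, f x := by
      refine (Finset.sum_subset (Finset.subset_univ B) fun x _ hx ↦ ?_).symm
      exact radialProfile_eq_zero t (by simpa [B] using hx)
    have hcardB : (B.card : ℝ) ≤ (k + 1) ^ r := by exact_mod_cast hG.card_dist_lt_le hk v r
    calc (∑ x, f x) ^ 2 ≤ B.card * ∑ x ∈ B, f x ^ 2 := by
          rw [hB]
          exact sq_sum_le_card_mul_sum_sq
      _ ≤ (k + 1) ^ r * ∑ x, f x ^ 2 := by
        gcongr
        exact B.subset_univ
      _ = _ := by simp only [dotProduct, sq]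
  refine hG.exists_eigenvalue_gt hk hc (f := f) ?_
  have h1 := mul_lt_mul_of_pos_right h hpos
  have h2 : (k / Fintype.card V : ℝ) * (∑ x, f x) ^ 2 ≤
      k / Fintype.card V * ((k + 1) ^ r * (f ⬝ᵥ f)) := by gcongr
  have h3 : (k / Fintype.card V : ℝ) * ((k + 1) ^ r * (f ⬝ᵥ f)) =
      k * (k + 1) ^ r / Fintype.card V * (f ⬝ᵥ f) := by ring
  linarith

/-- **Alon–Boppana**: for every `k ≥ 3` and `ε > 0` there is `N` such that every finite
connected `k`-regular graph on more than `N` vertices has an adjacency eigenvalue `λ ≠ k`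
with `λ > 2√(k−1) − ε`. -/
theorem alon_boppana (k : ℕ) (hk : 3 ≤ k) (ε : ℝ) (hε : 0 < ε) :
    ∃ N : ℕ, ∀ (V : Type) [Fintype V] [DecidableEq V]
      (G : SimpleGraph V) [DecidableRel G.Adj],
      G.Connected → G.IsRegularOfDegree k → Fintype.card V > N →
      ∃ lam : ℝ, (∃ x : V → ℝ, x ≠ 0 ∧ G.adjMatrix ℝ *ᵥ x = lam • x) ∧
        lam ≠ (k : ℝ) ∧ lam > 2 * Real.sqrt ((k : ℝ) - 1) - ε := by
  have hk' : (3 : ℝ) ≤ k := by exact_mod_cast hk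
  set t := Real.sqrt ((k : ℝ) - 1) with htdef
  have ht : 1 ≤ t := Real.one_le_sqrt.2 (by linarith)
  have hkt : (k : ℝ) = t ^ 2 + 1 := by
    rw [htdef, Real.sq_sqrt (by linarith)]
    ring
  set δ := min ε 1 with hδdef
  have hδ : 0 < δ := lt_min hε one_pos
  obtain ⟨r, hr⟩ := exists_nat_gt (4 * t / δ)
  obtain ⟨N, hN⟩ := exists_nat_gt (2 * (k * (k + 1) ^ r) / δ)
  refine ⟨N, fun V _ _ G _ hG hreg hcard ↦ ?_⟩
  have hcard' : (N : ℝ) < Fintype.card V := by exact_mod_cast hcard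
  have hn : 0 < (Fintype.card V : ℝ) := N.cast_nonneg.trans_lt hcard'
  obtain ⟨lam, hx, hlamk, hlam⟩ := hG.exists_eigenvalue_gt_of_ball hreg ht hkt (r := r)
    (c := 2 * t - δ) (by linarith [min_le_right ε 1]) <| by
      have h1 : 2 * t * (1 / (r + 1 : ℕ)) < δ / 2 := by
        rw [div_lt_iff₀ hδ] at hr
        rw [mul_one_div, div_lt_iff₀ (by positivity)]
        push_cast
        linarith
      have h2 : k * (k + 1) ^ r / (Fintype.card V : ℝ) < δ / 2 := by
        rw [div_lt_iff₀ hδ] at hN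
        rw [div_lt_iff₀ hn]
        nlinarith
      linarith
  exact ⟨lam, hx, hlamk, by linarith [min_le_left ε 1]⟩
end

section
/- (Kesten) Let k ≥ 2 and let W be the free product of k copies of ℤ/2ℤ, with the canonical involutive generators s₁, …, s_k (so that the Cayley graph of W with respect to {s₁,…,s_k} is the k-regular tree T_k). The adjacency operator A on ℓ²(W), defined by (Af)(x) = Σ_{i=1}^{k} f(s_i x), is a bounded self-adjoint operator whose spectrum equals the interval [−2√(k−1), 2√(k−1)]. -/
open Matrix

/-- The free product of `k` copies of `ℤ/2ℤ`; its Cayley graph with respect to the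
canonical involutive generators is the `k`-regular tree `T_k`. -/
abbrev KestenGroup (k : ℕ) : Type :=
  Monoid.CoprodI (fun _ : Fin k => Multiplicative (ZMod 2))

/-- The canonical generator of the `i`-th free factor. -/
def kestenGen (k : ℕ) (i : Fin k) : KestenGroup k :=
  Monoid.CoprodI.of (i := i) (Multiplicative.ofAdd (1 : ZMod 2))

/-- A bounded symmetric operator acting on an orthogonal sequence as `a` times the adjacency
operator of a half-line (away from the endpoint) has `[-2a, 2a]` in its spectrum. -/
theorem mem_spectrum_of_orthogonal_chain {E : Type*} [NormedAddCommGroup E]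
    [InnerProductSpace ℂ E] (T : E →L[ℂ] E) (hT : ∀ x y, inner ℂ (T x) y = inner ℂ x (T y))
    {a : ℝ} (ha : a ≠ 0) (v : ℕ → E) (hv : Pairwise fun m n => inner ℂ (v m) (v n) = 0)
    (hv0 : v 0 ≠ 0) (hTv : ∀ n, T (v (n + 1)) = (a : ℂ) • (v n + v (n + 2))) (θ : ℝ) :
    ((2 * a * Real.cos θ : ℝ) : ℂ) ∈ spectrum ℂ T := by
  have ha' : (a : ℂ) ≠ 0 := by exact_mod_cast ha
  have hstep : ∀ n, ‖v (n + 2)‖ = ‖v (n + 1)‖ := by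
    intro n
    have h := hT (v (n + 1)) (v (n + 2))
    rw [hTv, hTv, inner_smul_left, inner_smul_right, inner_add_left, inner_add_right,
      hv (show n ≠ n + 2 by lia), hv (show n + 1 ≠ n + 1 + 2 by lia), Complex.conj_ofReal,
      zero_add, add_zero] at h
    have h' := mul_left_cancel₀ ha' h
    rw [inner_self_eq_norm_sq_to_K, inner_self_eq_norm_sq_to_K] at h'
    have h'' : ‖v (n + 2)‖ ^ 2 = ‖v (n + 1)‖ ^ 2 := by exact_mod_cast h'
    exact (sq_eq_sq₀ (norm_nonneg _) (norm_nonneg _)).1 h''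
  have hnorm : ∀ n, ‖v (n + 1)‖ = ‖v 1‖ := by
    intro n
    induction n with
    | zero => rfl
    | succ n ih => rw [hstep, ih]
  have hv1 : 0 < ‖v 1‖ := by
    rw [norm_pos_iff]
    intro h1
    have h := hTv 0
    rw [zero_add, h1, map_zero, eq_comm, smul_eq_zero_iff_right ha'] at h
    have h2 : inner ℂ (v 0) (v 0 + v (0 + 2)) = 0 := by rw [h, inner_zero_right]
    rw [inner_add_right, hv (show 0 ≠ 0 + 2 by lia), add_zero, inner_self_eq_zero] at h2
    exact hv0 h2
  set z : ℂ := Complex.exp (θ * Complex.I) with hz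
  set w : ℂ := Complex.exp (-θ * Complex.I) with hw
  have hzw : w * z = 1 := by
    rw [hz, hw, ← Complex.exp_add]; simp
  have hnz : ‖z‖ = 1 := Complex.norm_exp_ofReal_mul_I θ
  have hnw : ‖w‖ = 1 := by
    have := congrArg norm hzw
    rwa [norm_mul, hnz, mul_one, norm_one] at this
  have hlam : ((2 * a * Real.cos θ : ℝ) : ℂ) = a * (z + w) := by
    push_cast
    rw [Complex.cos, hz, hw]; ring
  let f : ℕ → E := fun N => ∑ n ∈ Finset.range N, z ^ n • v (n + 1)
  have hf : ∀ N, ‖f N‖ ^ 2 = N * ‖v 1‖ ^ 2 := by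
    intro N
    induction N with
    | zero => simp [f]
    | succ N ih =>
      have horth : inner ℂ (f N) (z ^ N • v (N + 1)) = 0 := by
        simp only [f]
        rw [sum_inner]
        refine Finset.sum_eq_zero fun n hn => ?_
        rw [Finset.mem_range] at hn
        rw [inner_smul_left, inner_smul_right, hv (show n + 1 ≠ N + 1 by lia), mul_zero, mul_zero]
      have hsucc : f (N + 1) = f N + z ^ N • v (N + 1) := Finset.sum_range_succ _ _
      rw [hsucc, pow_two, norm_add_sq_eq_norm_sq_add_norm_sq_of_inner_eq_zero _ _ horth,
        ← pow_two, ← pow_two, ih, norm_smul, norm_pow, hnz, hnorm N]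
      push_cast
      ring
  have hTf : ∀ N, T (f N) - ((2 * a * Real.cos θ : ℝ) : ℂ) • f N =
      (a : ℂ) • (v 0 - z ^ N • v N + w • (z ^ N • v (N + 1) - v 1)) := by
    intro N
    induction N with
    | zero => simp [f]
    | succ N ih =>
      have hsucc : f (N + 1) = f N + z ^ N • v (N + 1) := Finset.sum_range_succ _ _
      rw [hsucc, map_add, map_smul, smul_add, add_sub_add_comm, ih, hTv, hlam]
      match_scalars
      · ring
      · ring
      · ring
      · ring
      · linear_combination (-a * z ^ N) * hzw
  by_contra hmem
  rw [spectrum.notMem_iff] at hmem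
  obtain ⟨u, hu⟩ := hmem
  have hbound : ∀ N, ‖f (N + 1)‖ ≤ ‖(↑u⁻¹ : E →L[ℂ] E)‖ * (|a| * (‖v 0‖ + 3 * ‖v 1‖)) := by
    intro N
    have h1 : (↑u⁻¹ : E →L[ℂ] E) ((u : E →L[ℂ] E) (f (N + 1))) = f (N + 1) := by
      rw [← mul_apply_eq_comp, Units.inv_mul, one_apply_eq_self]
    have h2 : ‖(u : E →L[ℂ] E) (f (N + 1))‖ ≤ |a| * (‖v 0‖ + 3 * ‖v 1‖) := by
      rw [hu, _root_.sub_apply, ← norm_neg, neg_sub, Algebra.algebraMap_eq_smul_one,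
        _root_.smul_apply, one_apply_eq_self, hTf, norm_smul,
        Complex.norm_real, Real.norm_eq_abs]
      gcongr
      refine (norm_add_le _ _).trans ?_
      have h3 := norm_sub_le (v 0) (z ^ (N + 1) • v (N + 1))
      have h4 := norm_sub_le (z ^ (N + 1) • v (N + 1 + 1)) (v 1)
      rw [norm_smul, norm_pow, hnz, one_pow, one_mul, hnorm] at h3 h4
      rw [norm_smul w, hnw]
      linarith
    calc ‖f (N + 1)‖ = ‖(↑u⁻¹ : E →L[ℂ] E) ((u : E →L[ℂ] E) (f (N + 1)))‖ := by rw [h1]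
      _ ≤ _ := (ContinuousLinearMap.le_opNorm _ _).trans (by gcongr)
  set C := ‖(↑u⁻¹ : E →L[ℂ] E)‖ * (|a| * (‖v 0‖ + 3 * ‖v 1‖))
  obtain ⟨N, hN⟩ := exists_nat_gt (C ^ 2 / ‖v 1‖ ^ 2)
  rw [div_lt_iff₀ (by positivity)] at hN
  have h5 := pow_le_pow_left₀ (norm_nonneg _) (hbound N) 2
  rw [hf] at h5
  push_cast at h5
  nlinarith [sq_nonneg ‖v 1‖]

namespace KestenGroup

variable {k : ℕ}

/-- The reduced word of an element. -/
def word (x : KestenGroup k) : Monoid.CoprodI.Word (fun _ : Fin k => Multiplicative (ZMod 2)) :=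
  Monoid.CoprodI.Word.equiv x

/-- The index of the first letter of the reduced word. -/
def firstLetter (x : KestenGroup k) : Option (Fin k) := (word x).fstIdx

/-- The word length, i.e. the distance to the root of the tree. -/
def length (x : KestenGroup k) : ℕ := (word x).toList.length

theorem gen_mul_gen (i : Fin k) : kestenGen k i * kestenGen k i = 1 := by
  rw [kestenGen, ← map_mul, ← map_one Monoid.CoprodI.of]
  rfl

theorem gen_mul_gen_mul (i : Fin k) (x : KestenGroup k) :
    kestenGen k i * (kestenGen k i * x) = x := by
  rw [← mul_assoc, gen_mul_gen, one_mul]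

theorem word_gen_mul (i : Fin k) (x : KestenGroup k) :
    word (kestenGen k i * x) = kestenGen k i • word x :=
  mul_smul (kestenGen k i) x
    (Monoid.CoprodI.Word.empty (M := fun _ : Fin k => Multiplicative (ZMod 2)))

theorem gen_smul_of_fstIdx_ne {i : Fin k}
    {w : Monoid.CoprodI.Word (fun _ : Fin k => Multiplicative (ZMod 2))} (h : w.fstIdx ≠ some i) :
    kestenGen k i • w = Monoid.CoprodI.Word.cons
      (M := fun _ : Fin k => Multiplicative (ZMod 2)) (Multiplicative.ofAdd (1 : ZMod 2)) w h
      (by decide) :=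
  Monoid.CoprodI.Word.cons_eq_smul.symm

theorem exists_eq_gen_smul {i : Fin k}
    {w : Monoid.CoprodI.Word (fun _ : Fin k => Multiplicative (ZMod 2))} (h : w.fstIdx = some i) :
    ∃ w' : Monoid.CoprodI.Word (fun _ : Fin k => Multiplicative (ZMod 2)),
      w'.fstIdx ≠ some i ∧ w = kestenGen k i • w' := by
  induction w using Monoid.CoprodI.Word.consRecOn with
  | empty => simp [Monoid.CoprodI.Word.fstIdx, Monoid.CoprodI.Word.empty] at h
  | cons j m w h1 h2 _ =>
    rw [Monoid.CoprodI.Word.fstIdx_cons, Option.some_inj] at h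
    subst h
    have hm : m = Multiplicative.ofAdd (1 : ZMod 2) := by
      revert m; decide
    subst hm
    exact ⟨w, h1, Monoid.CoprodI.Word.cons_eq_smul⟩

theorem firstLetter_gen_mul {i : Fin k} {x : KestenGroup k} (h : firstLetter x ≠ some i) :
    firstLetter (kestenGen k i * x) = some i := by
  rw [firstLetter, word_gen_mul, gen_smul_of_fstIdx_ne h]
  exact Monoid.CoprodI.Word.fstIdx_cons _ _ _ _

theorem length_gen_mul {i : Fin k} {x : KestenGroup k} (h : firstLetter x ≠ some i) :
    length (kestenGen k i * x) = length x + 1 := by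
  rw [length, word_gen_mul, gen_smul_of_fstIdx_ne h]
  simp [Monoid.CoprodI.Word.cons, length]

theorem firstLetter_gen_mul_ne {i : Fin k} {x : KestenGroup k} (h : firstLetter x = some i) :
    firstLetter (kestenGen k i * x) ≠ some i := by
  obtain ⟨w, hw, hx⟩ := exists_eq_gen_smul h
  rwa [firstLetter, word_gen_mul, hx, ← mul_smul, gen_mul_gen, one_smul]

theorem length_gen_mul_add_one {i : Fin k} {x : KestenGroup k} (h : firstLetter x = some i) :
    length (kestenGen k i * x) + 1 = length x := by
  rw [← length_gen_mul (firstLetter_gen_mul_ne h), gen_mul_gen_mul]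

theorem firstLetter_eq_none_iff {x : KestenGroup k} : firstLetter x = none ↔ length x = 0 := by
  simp [firstLetter, length, Monoid.CoprodI.Word.fstIdx]

theorem length_one : length (1 : KestenGroup k) = 0 := by
  simp [length, word, Monoid.CoprodI.Word.equiv, Monoid.CoprodI.Word.empty]

theorem length_eq_zero {x : KestenGroup k} : length x = 0 ↔ x = 1 := by
  refine ⟨fun h => ?_, fun h => h ▸ length_one⟩
  apply Monoid.CoprodI.Word.equiv.injective
  apply Monoid.CoprodI.Word.ext
  have h1 : (word x).toList = [] := List.length_eq_zero_iff.1 h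
  have h2 : (word (1 : KestenGroup k)).toList = [] := List.length_eq_zero_iff.1 length_one
  exact h1.trans h2.symm

theorem finite_sphere (n : ℕ) : {x : KestenGroup k | length x = n}.Finite := by
  induction n with
  | zero =>
    refine (Set.finite_singleton (1 : KestenGroup k)).subset fun x hx => length_eq_zero.1 hx
  | succ n ih =>
    refine (Set.finite_iUnion fun i : Fin k => ih.image (kestenGen k i * ·)).subset fun x hx => ?_
    rw [Set.mem_ofPred_eq] at hx
    cases h : firstLetter x with
    | none => rw [firstLetter_eq_none_iff] at h; lia
    | some i =>
      have := length_gen_mul_add_one h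
      exact Set.mem_iUnion.2 ⟨i, kestenGen k i * x, by rw [Set.mem_ofPred_eq]; lia,
        gen_mul_gen_mul i x⟩

/-- Sums over the neighbours of a vertex other than the root. -/
theorem sum_ite_firstLetter {M : Type*} [Semiring M] {x : KestenGroup k} {j : Fin k}
    (h : firstLetter x = some j) (a b : M) :
    ∑ i : Fin k, (if firstLetter x = some i then a else b) = a + ((k - 1 : ℕ) : M) * b := by
  rw [← Finset.add_sum_erase _ _ (Finset.mem_univ j), if_pos h,
    Finset.sum_congr rfl (g := fun _ => b)]
  · simp
  · intro i hi
    rw [if_neg]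
    rw [h, Option.some_inj]
    exact (Finset.ne_of_mem_erase hi).symm

end KestenGroup

section Reindex

variable {α : Type*}

theorem lp_two_summable_norm_sq (f : lp (fun _ : α => ℂ) 2) : Summable fun x => ‖f x‖ ^ 2 := by
  simpa using (lp.memℓp f).summable (by norm_num)

theorem lp_two_norm_sq_eq_tsum (f : lp (fun _ : α => ℂ) 2) : ‖f‖ ^ 2 = ∑' x, ‖f x‖ ^ 2 := by
  simpa using lp.norm_rpow_eq_tsum (by norm_num) f

/-- Reindexing of square-summable functions along a permutation. -/
noncomputable def lpReindex (σ : Equiv.Perm α) :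
    lp (fun _ : α => ℂ) 2 →L[ℂ] lp (fun _ : α => ℂ) 2 :=
  LinearMap.mkContinuous
    { toFun := fun f => ⟨fun x => f (σ x), memℓp_gen
        (by simpa [Function.comp_def] using σ.summable_iff.2 (lp_two_summable_norm_sq f))⟩
      map_add' := fun _ _ => rfl
      map_smul' := fun _ _ => rfl } 1 fun f => by
    rw [one_mul, ← sq_le_sq₀ (norm_nonneg _) (norm_nonneg _), lp_two_norm_sq_eq_tsum,
      lp_two_norm_sq_eq_tsum]
    exact (σ.tsum_eq fun x => ‖f x‖ ^ 2).le

theorem lpReindex_apply (σ : Equiv.Perm α) (f : lp (fun _ : α => ℂ) 2) (x : α) :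
    lpReindex σ f x = f (σ x) := rfl

theorem inner_lpReindex (σ : Equiv.Perm α) (hσ : ∀ x, σ (σ x) = x) (f g : lp (fun _ : α => ℂ) 2) :
    inner ℂ (lpReindex σ f) g = inner ℂ f (lpReindex σ g) := by
  rw [lp.inner_eq_tsum, lp.inner_eq_tsum, ← σ.tsum_eq]
  simp only [lpReindex_apply, hσ]

/-- The summation step of the Schur test. -/
theorem norm_le_mul_norm_of_weights {ι : Type*} [Fintype ι] (σ : ι → Equiv.Perm α)
    (w : ι → α → ℝ) (hw : ∀ i x, 0 ≤ w i x) {c : ℝ} (hc : 0 ≤ c) (hwc : ∀ x, ∑ i, w i x ≤ c)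
    (f g : lp (fun _ : α => ℂ) 2)
    (hg : ∀ x, ‖g x‖ ^ 2 ≤ c * ∑ i, w i (σ i x) * ‖f (σ i x)‖ ^ 2) : ‖g‖ ≤ c * ‖f‖ := by
  rw [← sq_le_sq₀ (norm_nonneg _) (by positivity), mul_pow, lp_two_norm_sq_eq_tsum,
    lp_two_norm_sq_eq_tsum]
  have hf := lp_two_summable_norm_sq f
  have hs : ∀ i, Summable fun x => w i x * ‖f x‖ ^ 2 := fun i =>
    Summable.of_nonneg_of_le (fun x => mul_nonneg (hw i x) (sq_nonneg _))
      (fun x => mul_le_mul_of_nonneg_right ((Finset.single_le_sum (fun j _ => hw j x)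
        (Finset.mem_univ i)).trans (hwc x)) (sq_nonneg _)) (hf.mul_left c)
  have hsσ : ∀ i, Summable fun x => w i (σ i x) * ‖f (σ i x)‖ ^ 2 := fun i =>
    (σ i).summable_iff.2 (hs i)
  have hswap : ∑' x, ∑ i, w i (σ i x) * ‖f (σ i x)‖ ^ 2 = ∑' x, ∑ i, w i x * ‖f x‖ ^ 2 := by
    rw [Summable.tsum_finsetSum fun i _ => hsσ i, Summable.tsum_finsetSum fun i _ => hs i]
    exact Finset.sum_congr rfl fun i _ => (σ i).tsum_eq fun x => w i x * ‖f x‖ ^ 2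
  calc ∑' x, ‖g x‖ ^ 2
      ≤ ∑' x, c * ∑ i, w i (σ i x) * ‖f (σ i x)‖ ^ 2 :=
        (lp_two_summable_norm_sq g).tsum_le_tsum hg ((summable_sum fun i _ => hsσ i).mul_left _)
    _ = c * ∑' x, ∑ i, w i x * ‖f x‖ ^ 2 := by rw [tsum_mul_left, hswap]
    _ ≤ c * ∑' x, c * ‖f x‖ ^ 2 := by
      refine mul_le_mul_of_nonneg_left ((summable_sum fun i _ => hs i).tsum_le_tsum
        (fun x => ?_) (hf.mul_left _)) hc
      rw [← Finset.sum_mul]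
      exact mul_le_mul_of_nonneg_right (hwc x) (sq_nonneg _)
    _ = c ^ 2 * ∑' x, ‖f x‖ ^ 2 := by rw [tsum_mul_left]; ring

end Reindex

namespace KestenGroup

variable {k : ℕ}

/-- The adjacency operator of the Cayley graph. -/
noncomputable def adjacency (k : ℕ) :
    lp (fun _ : KestenGroup k => ℂ) 2 →L[ℂ] lp (fun _ : KestenGroup k => ℂ) 2 :=
  ∑ i : Fin k, lpReindex (Equiv.mulLeft (kestenGen k i))

theorem adjacency_apply (f : lp (fun _ : KestenGroup k => ℂ) 2) (x : KestenGroup k) :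
    adjacency k f x = ∑ i : Fin k, f (kestenGen k i * x) := by
  rw [adjacency, _root_.sum_apply, lp.coeFn_sum, Finset.sum_apply]
  rfl

theorem inner_adjacency (f g : lp (fun _ : KestenGroup k => ℂ) 2) :
    inner ℂ (adjacency k f) g = inner ℂ f (adjacency k g) := by
  rw [adjacency, _root_.sum_apply, _root_.sum_apply, sum_inner,
    inner_sum]
  exact Finset.sum_congr rfl fun i _ => inner_lpReindex _ (gen_mul_gen_mul i) f g

theorem isSelfAdjoint_adjacency : IsSelfAdjoint (adjacency k) := by
  rw [ContinuousLinearMap.isSelfAdjoint_iff_isSymmetric]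
  exact inner_adjacency

theorem natCast_mul_inv_sqrt (hk : 2 ≤ k) :
    ((k - 1 : ℕ) : ℝ) * (√((k : ℝ) - 1))⁻¹ = √((k : ℝ) - 1) := by
  rw [Nat.cast_sub (by lia), Nat.cast_one, ← div_eq_mul_inv, Real.div_sqrt]

theorem sqrt_pos (hk : 2 ≤ k) : 0 < √((k : ℝ) - 1) := by
  have : (2 : ℝ) ≤ k := by exact_mod_cast hk
  exact Real.sqrt_pos.2 (by linarith)

/-- The weight of the edge at `x` labelled by `i` in the Schur test: the ratio of the values of
`(k - 1) ^ (-length / 2)` at its two endpoints. -/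
noncomputable def edgeWeight (i : Fin k) (x : KestenGroup k) : ℝ :=
  if firstLetter x = some i then √((k : ℝ) - 1) else (√((k : ℝ) - 1))⁻¹

theorem edgeWeight_pos (hk : 2 ≤ k) (i : Fin k) (x : KestenGroup k) : 0 < edgeWeight i x := by
  have := sqrt_pos hk
  unfold edgeWeight
  split_ifs <;> positivity

theorem edgeWeight_gen_mul (i : Fin k) (x : KestenGroup k) :
    edgeWeight i (kestenGen k i * x) = (edgeWeight i x)⁻¹ := by
  unfold edgeWeight
  by_cases h : firstLetter x = some i
  · rw [if_pos h, if_neg (firstLetter_gen_mul_ne h)]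
  · rw [if_neg h, if_pos (firstLetter_gen_mul h), inv_inv]

theorem sum_edgeWeight_le (hk : 2 ≤ k) (x : KestenGroup k) :
    ∑ i : Fin k, edgeWeight i x ≤ 2 * √((k : ℝ) - 1) := by
  unfold edgeWeight
  have hk' : (2 : ℝ) ≤ k := by exact_mod_cast hk
  cases h : firstLetter x with
  | none =>
    simp only [reduceCtorEq, if_false, Finset.sum_const, Finset.card_univ, Fintype.card_fin,
      nsmul_eq_mul]
    have hs := Real.mul_self_sqrt (show (0 : ℝ) ≤ k - 1 by linarith)
    rw [← div_eq_mul_inv, div_le_iff₀ (sqrt_pos hk)]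
    linarith
  | some j =>
    have := sum_ite_firstLetter h (√((k : ℝ) - 1)) (√((k : ℝ) - 1))⁻¹
    rw [h] at this
    rw [this, natCast_mul_inv_sqrt hk, two_mul]

theorem norm_adjacency_apply_sq_le (hk : 2 ≤ k) (f : lp (fun _ : KestenGroup k => ℂ) 2)
    (x : KestenGroup k) :
    ‖adjacency k f x‖ ^ 2 ≤ 2 * √((k : ℝ) - 1) * ∑ i : Fin k,
      edgeWeight i (kestenGen k i * x) * ‖f (kestenGen k i * x)‖ ^ 2 := by
  have hpos := fun i => edgeWeight_pos hk i x
  have hsum : ‖adjacency k f x‖ ≤ ∑ i : Fin k, ‖f (kestenGen k i * x)‖ := by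
    rw [adjacency_apply]
    exact norm_sum_le _ _
  calc ‖adjacency k f x‖ ^ 2 ≤ (∑ i : Fin k, ‖f (kestenGen k i * x)‖) ^ 2 := by gcongr
    _ ≤ (∑ i : Fin k, edgeWeight i x) *
        ∑ i : Fin k, edgeWeight i (kestenGen k i * x) * ‖f (kestenGen k i * x)‖ ^ 2 := by
      refine Finset.sum_sq_le_sum_mul_sum_of_sq_le_mul _ (fun i _ => (hpos i).le)
        (fun i _ => ?_) (fun i _ => le_of_eq ?_)
      · have := edgeWeight_pos hk i (kestenGen k i * x)
        positivity
      · rw [edgeWeight_gen_mul, mul_inv_cancel_left₀ (hpos i).ne']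
    _ ≤ _ := by
      refine mul_le_mul_of_nonneg_right (sum_edgeWeight_le hk x) (Finset.sum_nonneg fun i _ => ?_)
      have := edgeWeight_pos hk i (kestenGen k i * x)
      positivity

theorem norm_adjacency_le (hk : 2 ≤ k) : ‖adjacency k‖ ≤ 2 * √((k : ℝ) - 1) :=
  ContinuousLinearMap.opNorm_le_bound _ (by positivity) fun f =>
    norm_le_mul_norm_of_weights (fun i => Equiv.mulLeft (kestenGen k i)) edgeWeight
      (fun i x => (edgeWeight_pos hk i x).le) (by positivity) (sum_edgeWeight_le hk) f _
      (norm_adjacency_apply_sq_le hk f)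

/-- The indicator function of a sphere around the root, rescaled by `(k - 1) ^ (-n / 2)`. -/
noncomputable def sphereVec (k n : ℕ) : lp (fun _ : KestenGroup k => ℂ) 2 :=
  ⟨fun x => if length x = n then ((√((k : ℝ) - 1))⁻¹ : ℂ) ^ n else 0, memℓp_gen <|
    summable_of_hasFiniteSupport <| (finite_sphere n).subset fun x hx => by
      by_contra h
      rw [Set.mem_ofPred_eq] at h
      simp [h] at hx⟩

theorem sphereVec_apply (n : ℕ) (x : KestenGroup k) :
    sphereVec k n x = if length x = n then ((√((k : ℝ) - 1))⁻¹ : ℂ) ^ n else 0 := rfl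

theorem inner_sphereVec {m n : ℕ} (h : m ≠ n) :
    inner ℂ (sphereVec k m) (sphereVec k n) = 0 := by
  rw [lp.inner_eq_tsum]
  refine (tsum_congr fun x => ?_).trans tsum_zero
  rw [sphereVec_apply, sphereVec_apply]
  by_cases hm : length x = m
  · rw [if_neg (show length x ≠ n by lia), inner_zero_right]
  · rw [if_neg hm, inner_zero_left]

theorem sphereVec_one_ne_zero (hk : 2 ≤ k) : sphereVec k 1 ≠ 0 := by
  intro h
  let i : Fin k := ⟨0, by lia⟩
  have hl : length (kestenGen k i * 1) = 1 := by
    rw [length_gen_mul, length_one]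
    rw [firstLetter_eq_none_iff.2 length_one]
    exact nofun
  have h' := sphereVec_apply 1 (kestenGen k i * 1)
  rw [h, if_pos hl, lp.coeFn_zero, Pi.zero_apply, pow_one, eq_comm, inv_eq_zero] at h'
  exact (sqrt_pos hk).ne' (Complex.ofReal_eq_zero.1 h')

theorem adjacency_sphereVec (hk : 2 ≤ k) (n : ℕ) :
    adjacency k (sphereVec k (n + 2)) =
      ((√((k : ℝ) - 1) : ℝ) : ℂ) • (sphereVec k (n + 1) + sphereVec k (n + 3)) := by
  ext x
  have hs : ((√((k : ℝ) - 1) : ℝ) : ℂ) ≠ 0 := by exact_mod_cast (sqrt_pos hk).ne'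
  have hq : ((k - 1 : ℕ) : ℂ) * ((√((k : ℝ) - 1) : ℝ) : ℂ)⁻¹ = ((√((k : ℝ) - 1) : ℝ) : ℂ) := by
    exact_mod_cast natCast_mul_inv_sqrt hk
  rw [adjacency_apply, lp.coeFn_smul, Pi.smul_apply, lp.coeFn_add, Pi.add_apply, smul_eq_mul]
  simp only [sphereVec_apply]
  set s : ℂ := ((√((k : ℝ) - 1) : ℝ) : ℂ)
  cases h : firstLetter x with
  | none =>
    have h0 := firstLetter_eq_none_iff.1 h
    rw [Finset.sum_eq_zero fun i _ => ?_, if_neg (by lia), if_neg (by lia), add_zero, mul_zero]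
    rw [length_gen_mul (by simp [h]), if_neg (by lia)]
  | some j =>
    have hj := length_gen_mul_add_one h
    have hterm : ∀ i : Fin k, (if length (kestenGen k i * x) = n + 2 then s⁻¹ ^ (n + 2) else 0) =
        if firstLetter x = some i then (if length x = n + 3 then s⁻¹ ^ (n + 2) else 0)
          else (if length x = n + 1 then s⁻¹ ^ (n + 2) else 0) := by
      intro i
      by_cases hi : firstLetter x = some i
      · have := length_gen_mul_add_one hi
        rw [if_pos hi]
        exact if_congr (by lia) rfl rfl
      · rw [if_neg hi, length_gen_mul hi]
        exact if_congr (by lia) rfl rfl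
    rw [Finset.sum_congr rfl fun i _ => hterm i, sum_ite_firstLetter h, mul_add, mul_ite, mul_ite,
      mul_ite, mul_zero, mul_zero, add_comm, pow_succ' _ (n + 2), mul_inv_cancel_left₀ hs,
      pow_succ' _ (n + 1), ← mul_assoc, hq]

theorem mem_spectrum_adjacency (hk : 2 ≤ k) (θ : ℝ) :
    ((2 * √((k : ℝ) - 1) * Real.cos θ : ℝ) : ℂ) ∈ spectrum ℂ (adjacency k) :=
  mem_spectrum_of_orthogonal_chain (adjacency k) inner_adjacency (sqrt_pos hk).ne'
    (fun n => sphereVec k (n + 1)) (fun _ _ h => inner_sphereVec (by lia))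
    (sphereVec_one_ne_zero hk) (adjacency_sphereVec hk) θ

theorem norm_le_of_mem_spectrum_adjacency (hk : 2 ≤ k) {z : ℂ}
    (hz : z ∈ spectrum ℂ (adjacency k)) : ‖z‖ ≤ 2 * √((k : ℝ) - 1) := by
  refine (spectrum.norm_le_norm_mul_of_mem hz).trans ?_
  refine (mul_le_of_le_one_right (norm_nonneg _) ?_).trans (norm_adjacency_le hk)
  exact ContinuousLinearMap.norm_id_le

end KestenGroup

/-- **Kesten**: the adjacency operator of the `k`-regular tree, realized on `ℓ²(W)` where
`W` is the free product of `k` copies of `ℤ/2ℤ`, by `(Af)(x) = ∑ᵢ f(sᵢx)`, is a bounded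
self-adjoint operator whose spectrum is the interval `[−2√(k−1), 2√(k−1)]`. -/
theorem kesten_spectrum (k : ℕ) (hk : 2 ≤ k) :
    ∃ A : lp (fun _ : KestenGroup k => ℂ) 2 →L[ℂ] lp (fun _ : KestenGroup k => ℂ) 2,
      (∀ (f : lp (fun _ : KestenGroup k => ℂ) 2) (x : KestenGroup k),
        (A f : ∀ _ : KestenGroup k, ℂ) x
          = ∑ i : Fin k, (f : ∀ _ : KestenGroup k, ℂ) (kestenGen k i * x)) ∧
      IsSelfAdjoint A ∧
      spectrum ℂ A = (fun r : ℝ => (r : ℂ)) ''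
        Set.Icc (-(2 * Real.sqrt ((k : ℝ) - 1))) (2 * Real.sqrt ((k : ℝ) - 1)) := by
  refine ⟨KestenGroup.adjacency k, KestenGroup.adjacency_apply,
    KestenGroup.isSelfAdjoint_adjacency, Set.Subset.antisymm (fun z hz => ?_) ?_⟩
  · have hre := KestenGroup.isSelfAdjoint_adjacency.mem_spectrum_eq_re hz
    exact ⟨z.re, abs_le.1 ((Complex.abs_re_le_norm z).trans
      (KestenGroup.norm_le_of_mem_spectrum_adjacency hk hz)), hre.symm⟩
  · rintro _ ⟨r, ⟨hr1, hr2⟩, rfl⟩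
    have hpos := KestenGroup.sqrt_pos hk
    have h := KestenGroup.mem_spectrum_adjacency hk (Real.arccos (r / (2 * √((k : ℝ) - 1))))
    rwa [Real.cos_arccos (by rw [le_div_iff₀ (by positivity)]; linarith)
      (by rw [div_le_iff₀ (by positivity)]; linarith), mul_div_cancel₀ _ (by positivity)] at h
end

section
/- (Marcus–Spielman–Srivastava) For every integer k ≥ 3 and every N there exists a finite connected bipartite k-regular graph X with more than N vertices such that every eigenvalue λ of the adjacency matrix of X satisfies |λ| = k or |λ| ≤ 2√(k−1); that is, there exist infinitely many k-regular bipartite Ramanujan graphs. -/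
open Matrix
open scoped Classical

section SignedAverage

variable {V : Type*} [DecidableEq V]

/-- The symmetric `0`-`1` matrix supported on the (at most two) positions given by `e`. -/
def edgeMatrix (K : Type*) [Zero K] [One K] (e : Sym2 V) : Matrix V V K :=
  Matrix.of fun i j => if s(i, j) = e then 1 else 0

theorem edgeMatrix_mk_apply (K : Type*) [Zero K] [One K] (u v i j : V) :
    edgeMatrix K s(u, v) i j = if (i = u ∧ j = v) ∨ (i = v ∧ j = u) then 1 else 0 := by
  simp [edgeMatrix]

variable [Fintype V]

/-- The average of `det (M + ∑ ± edgeMatrix e)` over all choices of signs for the pairs `e ∈ L`. -/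
noncomputable def signedAvg {K : Type*} [CommRing K] [Algebra ℝ K] :
    List (Sym2 V) → Matrix V V K → K
  | [], M => M.det
  | e :: L, M =>
    (1 / 2 : ℝ) • (signedAvg L (M + edgeMatrix K e) + signedAvg L (M - edgeMatrix K e))

/-- The matrix `N` with the rows indexed by `T` replaced by those of the identity matrix. -/
def pinRows {K : Type*} [CommRing K] (T : Finset V) (N : Matrix V V K) : Matrix V V K :=
  Matrix.of fun i j => if i ∈ T then (1 : Matrix V V K) i j else N i j

/-- The signed sum of `det N[V \ (T ∪ V(m))]` over all matchings `m` in `L` which avoid `T`. -/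
def matchDet {K : Type*} [CommRing K] : List (Sym2 V) → Finset V → Matrix V V K → K
  | [], T, N => (pinRows T N).det
  | e :: L, T, N => matchDet L T N -
      if Disjoint e.toFinset T then matchDet L (T ∪ e.toFinset) N else 0

theorem det_updateRow_pi_add_smul {K : Type*} [CommRing K] (P : Matrix V V K) (v : V)
    (c : K) (w : V → K) :
    (P.updateRow v (P v + c • w)).det = P.det + c * (P.updateRow v w).det := by
  rw [det_updateRow_add, det_updateRow_smul, updateRow_eq_self]

theorem det_pinRows_add_smul_edgeMatrix {K : Type*} [CommRing K] (e : Sym2 V) (he : ¬ e.IsDiag)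
    (T : Finset V) (N : Matrix V V K) :
    ∃ x : K, ∀ c : K, (pinRows T (N + c • edgeMatrix K e)).det = (pinRows T N).det + c * x -
      c ^ 2 * (if Disjoint e.toFinset T then (pinRows (T ∪ e.toFinset) N).det else 0) := by
  induction e using Sym2.ind with
  | _ u v =>
  have huv : u ≠ v := by simpa using he
  have key : ∀ u v : V, u ≠ v → u ∈ T → ∃ x : K, ∀ c : K,
      (pinRows T (N + c • edgeMatrix K s(u, v))).det = (pinRows T N).det + c * x := by
    intro u v huv hu
    by_cases hv : v ∈ T
    · refine ⟨0, fun c => ?_⟩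
      rw [mul_zero, add_zero]
      congr 1
      ext i j
      simp only [pinRows, edgeMatrix_mk_apply, of_apply, Matrix.add_apply, Matrix.smul_apply,
        smul_eq_mul]
      grind
    · refine ⟨((pinRows T N).updateRow v (Pi.single u 1)).det, fun c => ?_⟩
      rw [← det_updateRow_pi_add_smul]
      congr 1
      ext i j
      simp only [pinRows, edgeMatrix_mk_apply, of_apply, Matrix.add_apply, Matrix.smul_apply,
        updateRow_apply, Pi.add_apply, Pi.smul_apply, Pi.single_apply, smul_eq_mul]
      grind
  by_cases hu : u ∈ T
  · have hd : ¬ Disjoint s(u, v).toFinset T := by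
      rw [Finset.not_disjoint_iff]; exact ⟨u, by simp, hu⟩
    simpa [hd] using key u v huv hu
  by_cases hv : v ∈ T
  · have hd : ¬ Disjoint s(u, v).toFinset T := by
      rw [Finset.not_disjoint_iff]; exact ⟨v, by simp, hv⟩
    have := key v u huv.symm hv
    rw [Sym2.eq_swap] at this
    simpa [hd] using this
  have hd : Disjoint s(u, v).toFinset T := by
    rw [Finset.disjoint_left]; intro a ha
    rcases Sym2.mem_iff.1 (Sym2.mem_toFinset.1 ha) with rfl | rfl <;> assumption
  set P := pinRows T N with hP
  have e1 : ∀ c : K, pinRows T (N + c • edgeMatrix K s(u, v)) =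
      (P.updateRow u (P u + c • Pi.single v 1)).updateRow v
        ((P.updateRow u (P u + c • Pi.single v 1)) v + c • Pi.single u 1) := by
    intro c
    ext i j
    simp only [hP, pinRows, edgeMatrix_mk_apply, of_apply, Matrix.add_apply, Matrix.smul_apply,
      updateRow_apply, Pi.add_apply, Pi.smul_apply, Pi.single_apply, smul_eq_mul]
    grind
  have e2 : (pinRows (T ∪ s(u, v).toFinset) N).det =
      - ((P.updateRow u (Pi.single v 1)).updateRow v (Pi.single u 1)).det := by
    have h : pinRows (T ∪ s(u, v).toFinset) N =
        ((P.updateRow u (Pi.single v 1)).updateRow v (Pi.single u 1)).submatrix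
          (Equiv.swap u v) id := by
      ext i j
      by_cases hi : i = u
      · subst hi
        simp [pinRows, Matrix.one_apply, Pi.single_apply, eq_comm]
      by_cases hi' : i = v
      · subst hi'
        simp [pinRows, Matrix.one_apply, Pi.single_apply, updateRow_apply, huv, eq_comm]
      · rw [submatrix_apply, Equiv.swap_apply_of_ne_of_ne hi hi', updateRow_ne hi',
          updateRow_ne hi]
        simp [pinRows, hP, hi, hi']
    rw [h, det_permute]
    simp [Equiv.Perm.sign_swap huv]
  refine ⟨(P.updateRow u (Pi.single v 1)).det + (P.updateRow v (Pi.single u 1)).det, fun c => ?_⟩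
  rw [if_pos hd, e2, e1, det_updateRow_pi_add_smul, det_updateRow_pi_add_smul,
    updateRow_comm _ huv, updateRow_comm _ huv]
  have : P u = (P.updateRow v (Pi.single u 1)) u := by rw [updateRow_ne huv]
  rw [this, det_updateRow_pi_add_smul]
  ring

theorem matchDet_cons_eq_average {K : Type*} [CommRing K] [Algebra ℝ K] (e : Sym2 V)
    (he : ¬ e.IsDiag) (L : List (Sym2 V)) (T : Finset V) (N : Matrix V V K) :
    (1 / 2 : ℝ) • (matchDet L T (N + edgeMatrix K e) + matchDet L T (N - edgeMatrix K e)) =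
      matchDet (e :: L) T N := by
  have half : ∀ a : K, (1 / 2 : ℝ) • (a + a) = a := fun a => by
    rw [← two_smul ℝ a, smul_smul]; norm_num
  induction L generalizing T with
  | nil =>
    obtain ⟨x, hx⟩ := det_pinRows_add_smul_edgeMatrix e he T N
    have h1 := hx 1
    have h2 := hx (-1)
    rw [one_smul] at h1
    rw [neg_one_smul, ← sub_eq_add_neg] at h2
    simp only [matchDet]
    rw [h1, h2]
    refine Eq.trans ?_ (half _)
    congr 1
    ring
  | cons f L ih =>
    have h1 := ih T
    have h2 := ih (T ∪ f.toFinset)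
    have hd : (Disjoint f.toFinset T ∧ Disjoint e.toFinset (T ∪ f.toFinset)) ↔
        (Disjoint e.toFinset T ∧ Disjoint f.toFinset (T ∪ e.toFinset)) := by
      simp only [Finset.disjoint_union_right, disjoint_comm (a := e.toFinset) (b := f.toFinset)]
      tauto
    have hu : T ∪ f.toFinset ∪ e.toFinset = T ∪ e.toFinset ∪ f.toFinset := by
      rw [Finset.union_assoc, Finset.union_comm f.toFinset, ← Finset.union_assoc]
    simp only [matchDet] at h1 h2 ⊢
    rw [hu] at h2
    by_cases hf : Disjoint f.toFinset T
    · simp only [hf, if_true] at hd ⊢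
      rw [sub_add_sub_comm, smul_sub, h1, h2]
      by_cases h : Disjoint e.toFinset T <;>
      by_cases h' : Disjoint f.toFinset (T ∪ e.toFinset) <;>
      simp_all <;> ring
    · simp only [hf, if_false, sub_zero, h1] at hd ⊢
      by_cases h : Disjoint e.toFinset T <;>
      by_cases h' : Disjoint f.toFinset (T ∪ e.toFinset) <;>
      simp_all

theorem signedAvg_eq_matchDet {K : Type*} [CommRing K] [Algebra ℝ K] (L : List (Sym2 V))
    (hL : ∀ e ∈ L, ¬ e.IsDiag) (N : Matrix V V K) : signedAvg L N = matchDet L ∅ N := by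
  induction L generalizing N with
  | nil =>
    simp only [signedAvg, matchDet]
    congr 1
  | cons e L ih =>
    rw [← matchDet_cons_eq_average e (hL e (by simp)), signedAvg,
      ih fun f hf => hL f (by simp [hf]), ih fun f hf => hL f (by simp [hf])]

theorem matchDet_insert_recursion {K : Type*} [CommRing K] (x : K) (L : List (Sym2 V))
    (v : V) (T : Finset V) (hv : v ∉ T) :
    matchDet L T (x • (1 : Matrix V V K)) = x * matchDet L (insert v T) (x • 1) -
      ((L.filter fun e => v ∈ e ∧ Disjoint e.toFinset T).map
        fun e => matchDet L (T ∪ e.toFinset) (x • (1 : Matrix V V K))).sum := by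
  induction L generalizing T with
  | nil =>
    have h : ∀ S : Finset V, pinRows S (x • (1 : Matrix V V K)) =
        diagonal fun i => if i ∈ S then 1 else x := by
      intro S
      ext i j
      by_cases hij : i = j
      · subst hij; simp [pinRows]
      · simp [pinRows, hij]
    simp only [matchDet, h, det_diagonal, List.filter_nil, List.map_nil, List.sum_nil, sub_zero]
    rw [← Finset.mul_prod_erase _ _ (Finset.mem_univ v),
      ← Finset.mul_prod_erase _ (fun i => if i ∈ insert v T then (1 : K) else x)
        (Finset.mem_univ v)]
    simp only [hv, if_false, Finset.mem_insert_self, if_true, one_mul]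
    congr 1
    refine Finset.prod_congr rfl fun i hi => ?_
    simp [Finset.ne_of_mem_erase hi]
  | cons f L ih =>
    by_cases hvf : v ∈ f
    · have hnd : ∀ S : Finset V, v ∈ S → ¬ Disjoint f.toFinset S := fun S hS => by
        rw [Finset.not_disjoint_iff]; exact ⟨v, by simpa using hvf, hS⟩
      have hm : ∀ S : Finset V, v ∈ S → matchDet (f :: L) S (x • (1 : Matrix V V K)) =
          matchDet L S (x • 1) := fun S hS => by simp [matchDet, hnd S hS]
      have hs : ((L.filter fun e => v ∈ e ∧ Disjoint e.toFinset T).map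
          fun e => matchDet (f :: L) (T ∪ e.toFinset) (x • (1 : Matrix V V K))) =
          ((L.filter fun e => v ∈ e ∧ Disjoint e.toFinset T).map
          fun e => matchDet L (T ∪ e.toFinset) (x • (1 : Matrix V V K))) := by
        refine List.map_congr_left fun e he => hm _ ?_
        simp only [List.mem_filter, decide_eq_true_eq] at he
        simp [he.2.1]
      rw [hm (insert v T) (by simp), List.filter_cons]
      by_cases hd : Disjoint f.toFinset T
      · simp only [hvf, hd, and_self, decide_true, if_true, List.map_cons, List.sum_cons, hs]
        rw [hm (T ∪ f.toFinset) (by simp [hvf])]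
        simp only [matchDet, hd, if_true]
        rw [ih T hv]; ring
      · simp only [hvf, hd, and_false, decide_false, Bool.false_eq_true, if_false, hs]
        simp only [matchDet, hd, if_false]
        rw [ih T hv]; ring
    · rw [List.filter_cons]
      simp only [hvf, false_and, decide_false, Bool.false_eq_true, if_false]
      have hi : Disjoint f.toFinset (insert v T) ↔ Disjoint f.toFinset T := by
        simp [Finset.disjoint_insert_right, hvf]
      by_cases hd : Disjoint f.toFinset T
      · have h1 := ih T hv
        have h2 := ih (T ∪ f.toFinset) (by simp [hv, hvf])
        simp only [matchDet, hi, hd, if_true]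
        rw [h1, h2, Finset.insert_union]
        have hs : ∀ l : List (Sym2 V), (l.map fun e =>
            matchDet L (T ∪ e.toFinset) (x • (1 : Matrix V V K)) -
              if Disjoint f.toFinset (T ∪ e.toFinset) then
                matchDet L (T ∪ e.toFinset ∪ f.toFinset) (x • (1 : Matrix V V K)) else 0).sum =
            (l.map fun e => matchDet L (T ∪ e.toFinset) (x • (1 : Matrix V V K))).sum -
            ((l.filter fun e => Disjoint e.toFinset f.toFinset).map fun e =>
                matchDet L (T ∪ f.toFinset ∪ e.toFinset) (x • (1 : Matrix V V K))).sum := by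
          intro l
          induction l with
          | nil => simp
          | cons a l ihl =>
            rw [List.filter_cons]
            rw [List.map_cons, List.sum_cons, ihl, List.map_cons, List.sum_cons]
            simp only [Finset.disjoint_union_right, hd, true_and]
            rw [Finset.union_right_comm T]
            by_cases ha : Disjoint a.toFinset f.toFinset
            · simp only [ha, ha.symm, if_true, decide_true, List.map_cons, List.sum_cons]
              ring
            · have ha' : ¬ Disjoint f.toFinset a.toFinset := fun h => ha h.symm
              simp only [ha, ha', if_false, decide_false, Bool.false_eq_true]
              ring
        rw [hs, List.filter_filter]
        have hf : (L.filter fun e => v ∈ e ∧ Disjoint e.toFinset (T ∪ f.toFinset)) =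
            L.filter fun e => decide (Disjoint e.toFinset f.toFinset) &&
              decide (v ∈ e ∧ Disjoint e.toFinset T) := by
          refine List.filter_congr fun e _ => ?_
          rw [← Bool.decide_and, decide_eq_decide, Finset.disjoint_union_right]
          tauto
        rw [hf]
        ring
      · have hd' : ∀ S : Finset V, ¬ Disjoint f.toFinset (T ∪ S) := fun S h =>
          hd (h.mono_right Finset.subset_union_left)
        simp only [matchDet, hi, hd, hd', if_false, sub_zero]
        exact ih T hv

theorem matchDet_univ {K : Type*} [CommRing K] (L : List (Sym2 V)) (N : Matrix V V K) :
    matchDet L Finset.univ N = 1 := by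
  induction L with
  | nil =>
    have : pinRows Finset.univ N = 1 := by ext i j; simp [pinRows]
    rw [matchDet, this, det_one]
  | cons e L ih =>
    have h : ¬ Disjoint e.toFinset Finset.univ := by
      simp [← Finset.top_eq_univ]
    rw [matchDet, ih, if_neg h, sub_zero]

/-- The **Heilmann–Lieb** bound: matching polynomials of graphs of maximum degree at most `d + 1`
are positive to the right of `2 √d`. -/
theorem matchDet_pos_and_sqrt_mul_le {d : ℕ} (hd : 1 ≤ d) {x : ℝ} (hx : 2 * √(d : ℝ) < x)
    (L : List (Sym2 V)) (hL : ∀ e ∈ L, ¬ e.IsDiag)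
    (hdeg : ∀ v : V, (L.filter fun e => v ∈ e).length ≤ d + 1) (T : Finset V) :
    0 < matchDet L T (x • (1 : Matrix V V ℝ)) ∧
      ∀ v ∉ T, (∃ e ∈ L, v ∈ e ∧ ¬ Disjoint e.toFinset T) →
        √(d : ℝ) * matchDet L (insert v T) (x • (1 : Matrix V V ℝ)) ≤
          matchDet L T (x • (1 : Matrix V V ℝ)) := by
  induction h : Tᶜ.card using Nat.strong_induction_on generalizing T with
  | _ n ih =>
  have hd1 : (1 : ℝ) ≤ d := by exact_mod_cast hd
  set s := √(d : ℝ) with hs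
  have hs1 : 1 ≤ s := Real.one_le_sqrt.2 hd1
  have hss : s * s = d := Real.mul_self_sqrt (by positivity)
  have key : ∀ v ∉ T, 0 < matchDet L (insert v T) (x • (1 : Matrix V V ℝ)) ∧
      s * (x * matchDet L (insert v T) (x • 1)) - (L.filter fun e =>
        v ∈ e ∧ Disjoint e.toFinset T).length * matchDet L (insert v T) (x • 1) ≤
      s * matchDet L T (x • 1) := by
    intro v hv
    have ihv := ih (insert v T)ᶜ.card (by
      rw [← h]
      refine Finset.card_lt_card ?_
      rw [Finset.compl_ssubset_compl]
      exact Finset.ssubset_insert hv) (insert v T) rfl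
    refine ⟨ihv.1, ?_⟩
    rw [matchDet_insert_recursion x L v T hv, mul_sub]
    refine sub_le_sub_left ?_ _
    rw [← List.sum_map_mul_left]
    refine (List.sum_le_card_nsmul _ (matchDet L (insert v T) (x • 1)) ?_).trans ?_
    · intro y hy
      obtain ⟨e, he, rfl⟩ := List.mem_map.1 hy
      simp only [List.mem_filter, decide_eq_true_eq] at he
      obtain ⟨heL, hve, hdis⟩ := he
      obtain ⟨u, rfl⟩ := Sym2.mem_iff_exists.1 hve
      have huv : u ≠ v := fun huv => hL _ heL (by simp [huv])
      have huT : u ∉ T := Finset.disjoint_left.1 hdis (by simp)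
      have hT : T ∪ s(v, u).toFinset = insert u (insert v T) := by
        ext a; simp [Sym2.toFinset_mk_eq]; tauto
      rw [hT]
      refine ihv.2 u (by simp [huv, huT]) ⟨_, heL, by simp, ?_⟩
      rw [Finset.not_disjoint_iff]
      exact ⟨v, by simp, by simp⟩
    · simp
  have hff : ∀ v, (L.filter fun e => v ∈ e ∧ Disjoint e.toFinset T) =
      (L.filter fun e => v ∈ e).filter fun e => Disjoint e.toFinset T := by
    intro v
    rw [List.filter_filter]
    refine List.filter_congr fun e _ => ?_
    rw [← Bool.decide_and, decide_eq_decide]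
    tauto
  constructor
  · by_cases hT : T = Finset.univ
    · rw [hT, matchDet_univ]; exact one_pos
    · obtain ⟨v, hv⟩ : ∃ v, v ∉ T := by
        by_contra! hc; exact hT (Finset.eq_univ_of_forall hc)
      obtain ⟨h1, h2⟩ := key v hv
      have hc : ((L.filter fun e => v ∈ e ∧ Disjoint e.toFinset T).length : ℝ) ≤ d + 1 := by
        rw [hff]
        exact_mod_cast (List.length_filter_le _ _).trans (hdeg v)
      have : (0 : ℝ) < s * x - (L.filter fun e => v ∈ e ∧ Disjoint e.toFinset T).length := by
        nlinarith
      have := mul_pos this h1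
      exact pos_of_mul_pos_right (by linarith) (by linarith : 0 ≤ s)
  · rintro v hv ⟨e, heL, hve, hnd⟩
    obtain ⟨h1, h2⟩ := key v hv
    have hc : ((L.filter fun e => v ∈ e ∧ Disjoint e.toFinset T).length : ℝ) ≤ d := by
      rw [hff]
      have := (List.length_filter_lt_length_iff_exists (p := fun e : Sym2 V =>
        decide (Disjoint e.toFinset T)) (l := L.filter fun e => v ∈ e)).2
        ⟨e, by simp [heL, hve], by simpa using hnd⟩
      exact_mod_cast Nat.le_of_lt_succ (this.trans_le (hdeg v))
    have h3 : s * s ≤ s * x - (L.filter fun e => v ∈ e ∧ Disjoint e.toFinset T).length := by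
      nlinarith
    have := mul_le_mul_of_nonneg_right h3 h1.le
    refine le_of_mul_le_mul_left (?_ : s * _ ≤ s * _) (by linarith : 0 < s)
    linarith

theorem signedAvg_pos {d : ℕ} (hd : 1 ≤ d) {x : ℝ} (hx : 2 * √(d : ℝ) < x)
    (L : List (Sym2 V)) (hL : ∀ e ∈ L, ¬ e.IsDiag)
    (hdeg : ∀ v : V, (L.filter fun e => v ∈ e).length ≤ d + 1) :
    0 < signedAvg L (x • (1 : Matrix V V ℝ)) := by
  rw [signedAvg_eq_matchDet L hL]
  exact (matchDet_pos_and_sqrt_mul_le hd hx L hL hdeg ∅).1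

/-- The matrices whose skew-Hermitian part is `i` times a positive definite matrix. -/
def UpperHalf (M : Matrix V V ℂ) : Prop :=
  ∀ v ≠ 0, 0 < (star v ⬝ᵥ M *ᵥ v).im

omit [DecidableEq V] in
theorem UpperHalf.add {M N : Matrix V V ℂ} (hM : UpperHalf M)
    (hN : ∀ v, 0 ≤ (star v ⬝ᵥ N *ᵥ v).im) : UpperHalf (M + N) := by
  intro v hv
  rw [add_mulVec, dotProduct_add, Complex.add_im]
  exact add_pos_of_pos_of_nonneg (hM v hv) (hN v)

omit [DecidableEq V] in
theorem UpperHalf.add_isHermitian {M N : Matrix V V ℂ} (hM : UpperHalf M)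
    (hN : N.IsHermitian) : UpperHalf (M + N) :=
  hM.add fun v => (hN.im_star_dotProduct_mulVec_self v).ge

omit [DecidableEq V] in
theorem UpperHalf.add_smul_vecMulVec {M : Matrix V V ℂ} (hM : UpperHalf M) (a : V → ℂ) {t : ℂ}
    (ht : 0 ≤ t.im) : UpperHalf (M + t • vecMulVec a (star a)) := by
  refine hM.add fun v => ?_
  have h : star v ⬝ᵥ (t • vecMulVec a (star a)) *ᵥ v =
      t * (Complex.normSq (star a ⬝ᵥ v) : ℂ) := by
    rw [smul_mulVec, vecMulVec_mulVec, dotProduct_smul, ← Complex.mul_conj,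
      smul_eq_mul]
    congr 1
    rw [op_smul_eq_smul, dotProduct_smul, smul_eq_mul]
    congr 1
    exact Matrix.star_dotProduct _ _
  rw [h, Complex.im_mul_ofReal]
  exact mul_nonneg ht (Complex.normSq_nonneg _)

theorem UpperHalf.det_ne_zero {M : Matrix V V ℂ} (hM : UpperHalf M) : M.det ≠ 0 := by
  intro h
  obtain ⟨v, hv, h0⟩ := exists_mulVec_eq_zero_iff.2 h
  have := hM v hv
  simp [h0] at this

theorem upperHalf_smul_one_add {z : ℂ} (hz : 0 < z.im) {N : Matrix V V ℂ}
    (hN : N.IsHermitian) : UpperHalf (z • (1 : Matrix V V ℂ) + N) := by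
  refine UpperHalf.add_isHermitian (fun v hv => ?_) hN
  have h : star v ⬝ᵥ (z • (1 : Matrix V V ℂ)) *ᵥ v = z * ((∑ i, Complex.normSq (v i) : ℝ) : ℂ) := by
    rw [smul_mulVec, one_mulVec, dotProduct_smul, smul_eq_mul]
    congr 1
    simp [dotProduct, Complex.normSq_eq_conj_mul_self]
  rw [h, Complex.im_mul_ofReal]
  refine mul_pos hz ?_
  obtain ⟨i, hi⟩ := Function.ne_iff.1 hv
  exact Finset.sum_pos' (fun i _ => Complex.normSq_nonneg _)
    ⟨i, Finset.mem_univ _, Complex.normSq_pos.2 hi⟩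

omit [Fintype V] in
theorem isHermitian_edgeMatrix (e : Sym2 V) : (edgeMatrix ℂ e).IsHermitian := by
  ext i j
  simp only [edgeMatrix, conjTranspose_apply, of_apply, Sym2.eq_swap (a := j)]
  split_ifs <;> simp

theorem signedAvg_add_smul_vecMulVec (L : List (Sym2 V)) {M : Matrix V V ℂ} (hM : UpperHalf M)
    (a b : V → ℂ) :
    ∃ α : ℂ, ∀ t : ℂ, signedAvg L (M + t • vecMulVec a b) = signedAvg L M + t * α := by
  induction L generalizing M with
  | nil =>
    refine ⟨M.det * (b ⬝ᵥ M⁻¹ *ᵥ a), fun t => ?_⟩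
    have := det_add_replicateCol_mul_replicateRow (ι := Unit) hM.det_ne_zero.isUnit (t • a) b
    rw [signedAvg, signedAvg, ← smul_vecMulVec, vecMulVec_eq Unit, this,
      det_unique (n := Unit), Matrix.add_apply, one_apply_eq, Matrix.mul_assoc,
      ← replicateCol_mulVec, replicateRow_mul_replicateCol_apply, mulVec_smul, dotProduct_smul,
      smul_eq_mul]
    ring
  | cons e L ih =>
    obtain ⟨α, hα⟩ := ih (hM.add_isHermitian (isHermitian_edgeMatrix e))
    obtain ⟨β, hβ⟩ := ih (hM.add_isHermitian (isHermitian_edgeMatrix e).neg)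
    refine ⟨(1 / 2 : ℝ) • (α + β), fun t => ?_⟩
    rw [signedAvg, signedAvg, add_right_comm, hα, add_sub_right_comm, sub_eq_add_neg M, hβ,
      mul_smul_comm, ← smul_add]
    congr 1
    ring

theorem signedAvg_sub_vecMulVec_div (L : List (Sym2 V))
    (hL : ∀ M : Matrix V V ℂ, UpperHalf M → signedAvg L M ≠ 0) {M : Matrix V V ℂ}
    (hM : UpperHalf M) (a : V → ℂ) :
    signedAvg L (M - vecMulVec a (star a)) / signedAvg L M = 1 ∨
      0 < (signedAvg L (M - vecMulVec a (star a)) / signedAvg L M).im := by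
  obtain ⟨α, hα⟩ := signedAvg_add_smul_vecMulVec L hM a (star a)
  have h0 := hL M hM
  have h1 : signedAvg L (M - vecMulVec a (star a)) / signedAvg L M = 1 - α / signedAvg L M := by
    rw [sub_eq_add_neg, ← neg_one_smul ℂ, hα]
    field_simp
    ring
  rw [h1]
  by_cases hz : α = 0
  · left; simp [hz]
  right
  set w := α / signedAvg L M with hw
  have hw0 : w ≠ 0 := div_ne_zero hz h0
  by_contra! hc
  have hwim : 0 ≤ w.im := by simpa using hc
  refine hL _ (hM.add_smul_vecMulVec a (t := -w⁻¹) ?_) ?_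
  · rw [Complex.neg_im, Complex.inv_im, neg_div, neg_neg]
    exact div_nonneg hwim (Complex.normSq_nonneg _)
  · rw [hα, hw]
    field_simp
    ring

/-- The diagonal `0`-`1` matrix supported on the endpoints of `e`. -/
def endpointMatrix (K : Type*) [Zero K] [One K] (e : Sym2 V) : Matrix V V K :=
  diagonal fun i => if i ∈ e then 1 else 0

omit [Fintype V] in
theorem isHermitian_endpointMatrix (e : Sym2 V) : (endpointMatrix ℂ e).IsHermitian := by
  refine isHermitian_diagonal_of_self_adjoint _ ?_
  ext i
  simp only [Pi.star_apply]
  split_ifs <;> simp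

omit [Fintype V] in
theorem exists_endpointMatrix_sub_vecMulVec (e : Sym2 V) (he : ¬ e.IsDiag) :
    ∃ a b : V → ℂ, endpointMatrix ℂ e - vecMulVec a (star a) = edgeMatrix ℂ e ∧
      endpointMatrix ℂ e - vecMulVec b (star b) = -edgeMatrix ℂ e := by
  induction e using Sym2.ind with
  | _ u v =>
  have huv : u ≠ v := by simpa using he
  refine ⟨Pi.single u 1 - Pi.single v 1, Pi.single u 1 + Pi.single v 1, ?_, ?_⟩ <;>
  · ext i j
    simp only [endpointMatrix, Matrix.sub_apply, Matrix.neg_apply, diagonal_apply, Sym2.mem_iff,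
      edgeMatrix_mk_apply, vecMulVec_apply, Pi.sub_apply, Pi.add_apply, Pi.star_apply,
      Pi.single_apply, star_sub, star_add, apply_ite (star : ℂ → ℂ), star_one, star_zero]
    grind

theorem signedAvg_edgeMatrix_div (L : List (Sym2 V))
    (hL : ∀ M : Matrix V V ℂ, UpperHalf M → signedAvg L M ≠ 0) {M : Matrix V V ℂ}
    (hM : UpperHalf M) (e : Sym2 V) (he : ¬ e.IsDiag) :
    (signedAvg L (M + edgeMatrix ℂ e) / signedAvg L (M + endpointMatrix ℂ e) = 1 ∨
      0 < (signedAvg L (M + edgeMatrix ℂ e) / signedAvg L (M + endpointMatrix ℂ e)).im) ∧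
    (signedAvg L (M - edgeMatrix ℂ e) / signedAvg L (M + endpointMatrix ℂ e) = 1 ∨
      0 < (signedAvg L (M - edgeMatrix ℂ e) / signedAvg L (M + endpointMatrix ℂ e)).im) := by
  obtain ⟨a, b, ha, hb⟩ := exists_endpointMatrix_sub_vecMulVec e he
  have hM' := hM.add_isHermitian (isHermitian_endpointMatrix e)
  rw [sub_eq_add_neg M, ← hb, ← ha, ← add_sub_assoc, ← add_sub_assoc]
  exact ⟨signedAvg_sub_vecMulVec_div L hL hM' a, signedAvg_sub_vecMulVec_div L hL hM' b⟩

theorem signedAvg_ne_zero (L : List (Sym2 V)) (hL : ∀ e ∈ L, ¬ e.IsDiag) {M : Matrix V V ℂ}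
    (hM : UpperHalf M) : signedAvg L M ≠ 0 := by
  induction L generalizing M with
  | nil => exact hM.det_ne_zero
  | cons e L ih =>
    have ih' := fun (N : Matrix V V ℂ) (hN : UpperHalf N) =>
      ih (fun f hf => hL f (by simp [hf])) hN
    obtain ⟨h1, h2⟩ := signedAvg_edgeMatrix_div L ih' hM e (hL e (by simp))
    have h0 := ih' _ (hM.add_isHermitian (isHermitian_endpointMatrix e))
    rw [signedAvg]
    intro h
    have hsum : signedAvg L (M + edgeMatrix ℂ e) / signedAvg L (M + endpointMatrix ℂ e) +
        signedAvg L (M - edgeMatrix ℂ e) / signedAvg L (M + endpointMatrix ℂ e) = 0 := by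
      rw [← add_div, (smul_eq_zero.1 h).resolve_left (by norm_num), zero_div]
    have hre := congrArg Complex.re hsum
    have him := congrArg Complex.im hsum
    rw [Complex.add_re, Complex.zero_re] at hre
    rw [Complex.add_im, Complex.zero_im] at him
    rcases h1 with h1 | h1 <;> rcases h2 with h2 | h2
    · rw [h1, h2] at hre; norm_num at hre
    · rw [h1] at him; simp at him; linarith
    · rw [h2] at him; simp at him; linarith
    · linarith

section Interlacing

open Polynomial Filter Topology

theorem monotoneOn_eval_div_eval {f g : ℝ[X]} {c : ℝ} (hg : ∀ x > c, 0 < g.eval x)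
    (h : ∀ z : ℂ, 0 < z.im → 0 ≤ (aeval z f / aeval z g).im) :
    MonotoneOn (fun x => f.eval x / g.eval x) (Set.Ioi c) := by
  have hd : ∀ x > c, HasDerivAt (fun x => f.eval x / g.eval x)
      ((f.derivative.eval x * g.eval x - f.eval x * g.derivative.eval x) / g.eval x ^ 2) x :=
    fun x hx => (f.hasDerivAt x).div (g.hasDerivAt x) (hg x hx).ne'
  have ha : ∀ (p : ℝ[X]) (x : ℝ), aeval (x : ℂ) p = ((p.eval x : ℝ) : ℂ) := fun p x => by
    exact Polynomial.aeval_algebraMap_apply_eq_algebraMap_eval x p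
  refine monotoneOn_of_deriv_nonneg (convex_Ioi c)
    (fun x hx => (hd x hx).continuousAt.continuousWithinAt) (fun x hx => ?_) fun x hx => ?_
  · rw [interior_Ioi] at hx
    exact (hd x hx).differentiableAt.differentiableWithinAt
  rw [interior_Ioi] at hx
  rw [(hd x hx).deriv]
  set D := (f.derivative.eval x * g.eval x - f.eval x * g.derivative.eval x) / g.eval x ^ 2
    with hD
  have hc : HasDerivAt (fun z : ℂ => aeval z f / aeval z g) (D : ℂ) (x : ℂ) := by
    have := (f.hasDerivAt_aeval (x : ℂ)).div (g.hasDerivAt_aeval (x : ℂ))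
      (by rw [ha]; exact_mod_cast (hg x hx).ne')
    refine this.congr_deriv ?_
    rw [hD]
    simp only [ha]
    push_cast
    rfl
  have hp : HasDerivAt (fun y : ℝ => (x : ℂ) + y * Complex.I) Complex.I 0 := by
    simpa using ((Complex.ofRealCLM.hasDerivAt (x := (0 : ℝ))).mul_const Complex.I).const_add
      (x : ℂ)
  have hc' : HasDerivAt (fun z : ℂ => aeval z f / aeval z g) (D : ℂ)
      ((fun y : ℝ => (x : ℂ) + y * Complex.I) 0) := by simpa using hc
  have hcomp := hc'.scomp (0 : ℝ) hp
  have him : HasDerivAt (fun y : ℝ => (aeval ((x : ℂ) + y * Complex.I) f /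
      aeval ((x : ℂ) + y * Complex.I) g).im) D 0 := by
    have := Complex.imCLM.hasFDerivAt.comp_hasDerivAt (0 : ℝ) hcomp
    simpa [Function.comp_def] using this
  have hs := (hasDerivAt_iff_tendsto_slope.1 him).mono_left
    (nhdsWithin_mono (0 : ℝ) (fun y (hy : y ∈ Set.Ioi 0) => ne_of_gt hy))
  refine ge_of_tendsto hs ?_
  filter_upwards [self_mem_nhdsWithin] with y hy
  have hy' : 0 < y := hy
  rw [slope_def_field]
  have h0 : (aeval ((x : ℂ) + (0 : ℝ) * Complex.I) f /
      aeval ((x : ℂ) + (0 : ℝ) * Complex.I) g).im = 0 := by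
    rw [Complex.ofReal_zero, zero_mul, add_zero, ha, ha, ← Complex.ofReal_div, Complex.ofReal_im]
  rw [h0, sub_zero, sub_zero]
  exact div_nonneg (h _ (by simpa using hy')) hy'.le

theorem tendsto_eval_div_eval_atTop {f g : ℝ[X]} (hf : f.Monic) (hg : g.Monic)
    (hfg : f.natDegree = g.natDegree) :
    Tendsto (fun x => f.eval x / g.eval x) atTop (𝓝 1) := by
  have := f.div_tendsto_atTop_leadingCoeff_div_of_degree_eq g
    (by rw [degree_eq_natDegree hf.ne_zero, degree_eq_natDegree hg.ne_zero, hfg])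
  rwa [hf.leadingCoeff, hg.leadingCoeff, div_one] at this

theorem eval_le_eval_of_interlacing {f g : ℝ[X]} (hf : f.Monic) (hg : g.Monic)
    (hfg : f.natDegree = g.natDegree) {c : ℝ} (hc : ∀ x > c, 0 < g.eval x)
    (h : ∀ z : ℂ, 0 < z.im → 0 ≤ (aeval z f / aeval z g).im) : f.eval c ≤ g.eval c := by
  have hle : ∀ x > c, f.eval x ≤ g.eval x := by
    intro x hx
    have h1 : f.eval x / g.eval x ≤ 1 := by
      refine ge_of_tendsto (tendsto_eval_div_eval_atTop hf hg hfg) ?_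
      filter_upwards [eventually_ge_atTop x] with y hy
      exact monotoneOn_eval_div_eval hc h hx (lt_of_lt_of_le hx hy) hy
    rwa [div_le_one (hc x hx)] at h1
  refine le_of_tendsto_of_tendsto (b := 𝓝[>] c) (f.continuous.continuousWithinAt.tendsto)
    (g.continuous.continuousWithinAt.tendsto) ?_
  filter_upwards [self_mem_nhdsWithin] with x hx using hle x hx

theorem exists_greatest_nonpos {g : ℝ[X]} (hg : g.Monic) {x : ℝ} (hx : g.eval x ≤ 0) :
    ∃ c ≥ x, g.eval c ≤ 0 ∧ ∀ y > c, 0 < g.eval y := by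
  have hdeg : 0 < g.degree := by
    by_contra! hd
    rw [hg.degree_le_zero_iff_eq_one.1 hd] at hx
    norm_num at hx
  have ht := g.tendsto_atTop_of_leadingCoeff_nonneg hdeg (by rw [hg.leadingCoeff]; norm_num)
  obtain ⟨B, hB⟩ := eventually_atTop.1 (ht.eventually_gt_atTop 0)
  set S := {y : ℝ | g.eval y ≤ 0} with hS
  have hbdd : BddAbove S := ⟨B, fun y hy => by
    by_contra! hc
    exact absurd (hB y hc.le) (not_lt.2 hy)⟩
  have hclosed : IsClosed S := isClosed_le g.continuous continuous_const
  refine ⟨sSup S, le_csSup hbdd hx, hclosed.csSup_mem ⟨x, hx⟩ hbdd, fun y hy => ?_⟩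
  by_contra! hc
  exact absurd (le_csSup hbdd hc) (not_le.2 hy)

/-- If `f₀` and `f₁` have a common interlacing `g`, then one of them has no root to the right of
the largest root of `f₀ + f₁`. -/
theorem pos_or_pos_of_common_interlacing {f₀ f₁ g : ℝ[X]} (hf₀ : f₀.Monic) (hf₁ : f₁.Monic)
    (hg : g.Monic) (h₀ : f₀.natDegree = g.natDegree) (h₁ : f₁.natDegree = g.natDegree)
    (hi₀ : ∀ z : ℂ, 0 < z.im → 0 ≤ (aeval z f₀ / aeval z g).im)
    (hi₁ : ∀ z : ℂ, 0 < z.im → 0 ≤ (aeval z f₁ / aeval z g).im)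
    {β : ℝ} (hβ : ∀ x > β, 0 < f₀.eval x + f₁.eval x) :
    (∀ x > β, 0 < f₀.eval x) ∨ (∀ x > β, 0 < f₁.eval x) := by
  have hpos : ∀ x > β, 0 < g.eval x := by
    by_contra! hc
    obtain ⟨x, hx, hgx⟩ := hc
    obtain ⟨c, hcx, hgc, hc⟩ := exists_greatest_nonpos hg hgx
    have := hβ c (lt_of_lt_of_le hx hcx)
    have := eval_le_eval_of_interlacing hf₀ hg h₀ hc hi₀
    have := eval_le_eval_of_interlacing hf₁ hg h₁ hc hi₁
    linarith
  by_contra! hc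
  obtain ⟨⟨x₀, hx₀, h0⟩, x₁, hx₁, h1⟩ := hc
  have hx : min x₀ x₁ > β := lt_min hx₀ hx₁
  have hm₀ := monotoneOn_eval_div_eval hpos hi₀ hx hx₀ (min_le_left _ _)
  have hm₁ := monotoneOn_eval_div_eval hpos hi₁ hx hx₁ (min_le_right _ _)
  have h0' := hm₀.trans (div_nonpos_of_nonpos_of_nonneg h0 (hpos _ hx₀).le)
  have h1' := hm₁.trans (div_nonpos_of_nonpos_of_nonneg h1 (hpos _ hx₁).le)
  have := div_pos (hβ _ hx) (hpos _ hx)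
  rw [add_div] at this
  dsimp only at h0' h1'
  linarith

end Interlacing

theorem map_signedAvg {K K' : Type*} [CommRing K] [Algebra ℝ K] [CommRing K'] [Algebra ℝ K']
    (φ : K →ₐ[ℝ] K') (L : List (Sym2 V)) (M : Matrix V V K) :
    φ (signedAvg L M) = signedAvg L (M.map φ) := by
  have he : ∀ e : Sym2 V, (edgeMatrix K e).map φ = edgeMatrix K' e := by
    intro e
    ext i j
    simp [edgeMatrix, apply_ite φ]
  induction L generalizing M with
  | nil => exact φ.map_det M
  | cons e L ih =>
    rw [signedAvg, signedAvg, map_smul, map_add, ih, ih, Matrix.map_add φ (map_add φ),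
      Matrix.map_sub φ (map_sub φ), he]

/-- The average of the characteristic polynomials of `-(M + ∑ ± edgeMatrix e)` over all choices of
signs for the pairs `e ∈ L`. -/
noncomputable def signedAvgPoly (L : List (Sym2 V)) (M : Matrix V V ℝ) : Polynomial ℝ :=
  signedAvg L ((Polynomial.X : Polynomial ℝ) • (1 : Matrix V V (Polynomial ℝ)) +
    M.map Polynomial.C)

theorem eval_signedAvgPoly (L : List (Sym2 V)) (M : Matrix V V ℝ) (x : ℝ) :
    (signedAvgPoly L M).eval x = signedAvg L (x • (1 : Matrix V V ℝ) + M) := by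
  rw [← Polynomial.coe_aeval_eq_eval, signedAvgPoly, map_signedAvg]
  congr 1
  ext i j
  by_cases h : i = j <;> simp [h]

theorem aeval_signedAvgPoly (L : List (Sym2 V)) (M : Matrix V V ℝ) (z : ℂ) :
    Polynomial.aeval z (signedAvgPoly L M) =
      signedAvg L (z • (1 : Matrix V V ℂ) + M.map Complex.ofReal) := by
  rw [signedAvgPoly, map_signedAvg]
  congr 1
  ext i j
  by_cases h : i = j <;> simp [h]

theorem signedAvgPoly_cons (e : Sym2 V) (L : List (Sym2 V)) (M : Matrix V V ℝ) :
    signedAvgPoly (e :: L) M =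
      (1 / 2 : ℝ) • (signedAvgPoly L (M + edgeMatrix ℝ e) +
        signedAvgPoly L (M - edgeMatrix ℝ e)) := by
  have he : (edgeMatrix ℝ e).map Polynomial.C = edgeMatrix (Polynomial ℝ) e := by
    ext1 i j
    simp [edgeMatrix, apply_ite Polynomial.C]
  rw [signedAvgPoly, signedAvg, signedAvgPoly, signedAvgPoly,
    Matrix.map_add Polynomial.C (map_add _), Matrix.map_sub Polynomial.C (map_sub _), he,
    add_assoc, add_sub_assoc]

theorem signedAvgPoly_natDegree_le_and_coeff (L : List (Sym2 V)) (M : Matrix V V ℝ) :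
    (signedAvgPoly L M).natDegree ≤ Fintype.card V ∧
      (signedAvgPoly L M).coeff (Fintype.card V) = 1 := by
  induction L generalizing M with
  | nil =>
    have h : signedAvgPoly [] M = (-M).charpoly := by
      rw [signedAvgPoly, signedAvg, Matrix.charpoly, charmatrix]
      congr 1
      ext1 i j
      by_cases h : i = j <;> simp [h]
    rw [h]
    refine ⟨(charpoly_natDegree_eq_dim _).le, ?_⟩
    rw [← charpoly_natDegree_eq_dim (-M)]
    exact (charpoly_monic _).coeff_natDegree
  | cons e L ih =>
    obtain ⟨h1, h2⟩ := ih (M + edgeMatrix ℝ e)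
    obtain ⟨h3, h4⟩ := ih (M - edgeMatrix ℝ e)
    rw [signedAvgPoly_cons]
    refine ⟨(Polynomial.natDegree_smul_le _ _).trans
      (Polynomial.natDegree_add_le_of_degree_le h1 h3), ?_⟩
    rw [Polynomial.coeff_smul, Polynomial.coeff_add, h2, h4]
    norm_num

theorem monic_signedAvgPoly (L : List (Sym2 V)) (M : Matrix V V ℝ) :
    (signedAvgPoly L M).Monic :=
  Polynomial.monic_of_natDegree_le_of_coeff_eq_one _ (signedAvgPoly_natDegree_le_and_coeff L M).1
    (signedAvgPoly_natDegree_le_and_coeff L M).2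

theorem natDegree_signedAvgPoly (L : List (Sym2 V)) (M : Matrix V V ℝ) :
    (signedAvgPoly L M).natDegree = Fintype.card V := by
  obtain ⟨h1, h2⟩ := signedAvgPoly_natDegree_le_and_coeff L M
  exact h1.antisymm (Polynomial.le_natDegree_of_ne_zero (by rw [h2]; exact one_ne_zero))

theorem pos_or_pos_of_signedAvg_cons_pos (e : Sym2 V) (L : List (Sym2 V))
    (hL : ∀ f ∈ e :: L, ¬ f.IsDiag) {M : Matrix V V ℝ} (hM : M.IsSymm) {β : ℝ}
    (h : ∀ x > β, 0 < signedAvg (e :: L) (x • (1 : Matrix V V ℝ) + M)) :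
    (∀ x > β, 0 < signedAvg L (x • (1 : Matrix V V ℝ) + (M + edgeMatrix ℝ e))) ∨
      (∀ x > β, 0 < signedAvg L (x • (1 : Matrix V V ℝ) + (M - edgeMatrix ℝ e))) := by
  have hM' : (M.map Complex.ofReal).IsHermitian := by
    ext i j
    simp [hM.apply i j]
  have hE : (edgeMatrix ℝ e).map Complex.ofReal = edgeMatrix ℂ e := by
    ext i j
    simp [edgeMatrix, apply_ite Complex.ofReal]
  have hP : (endpointMatrix ℝ e).map Complex.ofReal = endpointMatrix ℂ e := by
    ext i j
    simp [endpointMatrix, diagonal_apply, apply_ite Complex.ofReal]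
  have hne := fun (N : Matrix V V ℂ) (hN : UpperHalf N) =>
    signedAvg_ne_zero L (fun f hf => hL f (by simp [hf])) hN
  have him : ∀ w : ℂ, w = 1 ∨ 0 < w.im → 0 ≤ w.im := by
    rintro w (rfl | h)
    · simp
    · exact h.le
  have hdiv := fun (z : ℂ) (hz : 0 < z.im) => signedAvg_edgeMatrix_div L hne
    (upperHalf_smul_one_add hz hM') e (hL e (by simp))
  have hofReal_add := fun A B : Matrix V V ℝ => Matrix.map_add Complex.ofReal Complex.ofReal_add A B
  have hofReal_sub := fun A B : Matrix V V ℝ => Matrix.map_sub Complex.ofReal Complex.ofReal_sub A B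
  have := pos_or_pos_of_common_interlacing (monic_signedAvgPoly L (M + edgeMatrix ℝ e))
    (monic_signedAvgPoly L (M - edgeMatrix ℝ e)) (monic_signedAvgPoly L (M + endpointMatrix ℝ e))
    (by rw [natDegree_signedAvgPoly, natDegree_signedAvgPoly])
    (by rw [natDegree_signedAvgPoly, natDegree_signedAvgPoly])
    (fun z hz => by
      rw [aeval_signedAvgPoly, aeval_signedAvgPoly, hofReal_add, hofReal_add, hE, hP,
        ← add_assoc, ← add_assoc]
      exact him _ (hdiv z hz).1)
    (fun z hz => by
      rw [aeval_signedAvgPoly, aeval_signedAvgPoly, hofReal_add, hofReal_sub, hE, hP,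
        ← add_assoc, ← add_sub_assoc]
      exact him _ (hdiv z hz).2)
    (β := β) (fun x hx => by
      have := h x hx
      rw [signedAvg, smul_eq_mul, add_assoc, add_sub_assoc] at this
      rw [eval_signedAvgPoly, eval_signedAvgPoly]
      linarith)
  simpa only [eval_signedAvgPoly] using this

omit [Fintype V] in
theorem isSymm_edgeMatrix (e : Sym2 V) : (edgeMatrix ℝ e).IsSymm := by
  ext i j
  simp [edgeMatrix, Sym2.eq_swap]

/-- Some signing does at least as well as the average over all signings. -/
theorem exists_signing_det_pos (L : List (Sym2 V)) (hL : ∀ e ∈ L, ¬ e.IsDiag) (hnd : L.Nodup)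
    {M : Matrix V V ℝ} (hM : M.IsSymm) {β : ℝ}
    (h : ∀ x > β, 0 < signedAvg L (x • (1 : Matrix V V ℝ) + M)) :
    ∃ σ : Sym2 V → ℤˣ, ∀ x > β,
      0 < (x • (1 : Matrix V V ℝ) + (M + (L.map fun e => σ e • edgeMatrix ℝ e).sum)).det := by
  induction L generalizing M with
  | nil => exact ⟨1, fun x hx => by simpa [signedAvg] using h x hx⟩
  | cons e L ih =>
    rw [List.nodup_cons] at hnd
    have hstep : ∃ s : ℤˣ, ∀ x > β,
        0 < signedAvg L (x • (1 : Matrix V V ℝ) + (M + s • edgeMatrix ℝ e)) := by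
      rcases pos_or_pos_of_signedAvg_cons_pos e L hL hM h with h | h
      · exact ⟨1, by simpa using h⟩
      · exact ⟨-1, by simpa [← sub_eq_add_neg, Units.smul_def] using h⟩
    obtain ⟨s, hs⟩ := hstep
    obtain ⟨σ, hσ⟩ := ih (fun f hf => hL f (by simp [hf])) hnd.2
      (hM.add ((isSymm_edgeMatrix e).smul s)) hs
    refine ⟨Function.update σ e s, fun x hx => ?_⟩
    have hmap : (L.map fun f => Function.update σ e s f • edgeMatrix ℝ f) =
        L.map fun f => σ f • edgeMatrix ℝ f := by
      refine List.map_congr_left fun f hf => ?_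
      rw [Function.update_of_ne (by rintro rfl; exact hnd.1 hf)]
    rw [List.map_cons, List.sum_cons, hmap, Function.update_self, ← add_assoc M]
    exact hσ x hx

end SignedAverage

section Lift

variable {V : Type*} [Fintype V]

/-- A finite connected bipartite `k`-regular graph all of whose adjacency eigenvalues `lam` satisfy
`|lam| = k` or `|lam| ≤ 2 * √(k - 1)`. -/
structure SimpleGraph.IsBipartiteRamanujan (k : ℕ) (G : SimpleGraph V) : Prop where
  connected : G.Connected
  colorable : G.Colorable 2
  card_adj : ∀ u, (Finset.univ.filter fun v => G.Adj u v).card = k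
  eigenvalue : ∀ (lam : ℝ) (x : V → ℝ), x ≠ 0 →
    (∀ u, ∑ v, (if G.Adj u v then x v else 0) = lam * x u) →
      |lam| = (k : ℝ) ∨ |lam| ≤ 2 * √((k : ℝ) - 1)

theorem SimpleGraph.exists_signing_abs_eigenvalue_le (G : SimpleGraph V) {k : ℕ} (hk : 2 ≤ k)
    (hcol : G.Colorable 2) (hcard : ∀ u, (Finset.univ.filter fun v => G.Adj u v).card = k) :
    ∃ σ : Sym2 V → ℤˣ, ∀ (lam : ℝ) (x : V → ℝ), x ≠ 0 →
      (∀ u, ∑ v, (if G.Adj u v then ((σ s(u, v) : ℤ) : ℝ) * x v else 0) = lam * x u) →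
        |lam| ≤ 2 * √((k : ℝ) - 1) := by
  obtain ⟨d, rfl⟩ : ∃ d, k = d + 1 := ⟨k - 1, by omega⟩
  have hdiag : ∀ e ∈ G.edgeFinset.toList, ¬ e.IsDiag := fun e he =>
    G.not_isDiag_of_mem_edgeSet (by simpa using he)
  have hdeg : ∀ v, (G.edgeFinset.toList.filter fun e => v ∈ e).length ≤ d + 1 := by
    intro v
    have h1 : (G.edgeFinset.toList.filter fun e => v ∈ e).length =
        (G.edgeFinset.filter fun e => v ∈ e).card := by
      rw [← Multiset.coe_card, ← Multiset.filter_coe, Finset.coe_toList]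
      rfl
    have h2 : G.edgeFinset.filter (fun e => v ∈ e) ⊆
        (Finset.univ.filter fun w => G.Adj v w).image fun w => s(v, w) := by
      intro e he
      rw [Finset.mem_filter, SimpleGraph.mem_edgeFinset] at he
      obtain ⟨h, w, rfl⟩ := he
      simpa using ⟨w, h, Or.inl rfl⟩
    rw [h1, ← hcard v]
    exact (Finset.card_le_card h2).trans Finset.card_image_le
  obtain ⟨σ, hσ⟩ := exists_signing_det_pos G.edgeFinset.toList hdiag (Finset.nodup_toList _)
    (M := 0) Matrix.isSymm_zero (β := 2 * √(d : ℝ)) (fun x hx => by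
      rw [add_zero]
      exact signedAvg_pos (by omega) hx _ hdiag hdeg)
  have hentry : ∀ i j, (G.edgeFinset.toList.map fun e => σ e • edgeMatrix ℝ e).sum i j =
      if G.Adj i j then ((σ s(i, j) : ℤ) : ℝ) else 0 := by
    intro i j
    rw [Finset.sum_map_toList, Matrix.sum_apply]
    have : ∀ e : Sym2 V, (σ e • edgeMatrix ℝ e) i j =
        if s(i, j) = e then ((σ e : ℤ) : ℝ) else 0 := by
      intro e
      simp [edgeMatrix, Units.smul_def]
    simp only [this, Finset.sum_ite_eq, SimpleGraph.mem_edgeFinset, SimpleGraph.mem_edgeSet]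
  obtain ⟨c⟩ := hcol
  have hneg : ∀ (lam : ℝ) (x : V → ℝ), x ≠ 0 →
      (∀ u, ∑ v, (if G.Adj u v then ((σ s(u, v) : ℤ) : ℝ) * x v else 0) = lam * x u) →
        -lam ≤ 2 * √(d : ℝ) := by
    intro lam x hx h
    by_contra! hlt
    refine (hσ _ hlt).ne' (Matrix.exists_mulVec_eq_zero_iff.mp ⟨x, hx, ?_⟩)
    rw [zero_add, Matrix.add_mulVec, Matrix.smul_mulVec, Matrix.one_mulVec]
    ext u
    have : ((G.edgeFinset.toList.map fun e => σ e • edgeMatrix ℝ e).sum *ᵥ x) u = lam * x u := by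
      rw [← h u, Matrix.mulVec, dotProduct]
      simp only [hentry, ite_mul, zero_mul]
    rw [Pi.add_apply, this]
    simp
  refine ⟨σ, fun lam x hx h => ?_⟩
  rw [Nat.cast_add_one, add_sub_cancel_right]
  refine abs_le'.mpr ⟨?_, hneg lam x hx h⟩
  set ε : V → ℝ := fun v => if c v = 0 then 1 else -1 with hε
  have hε0 : ∀ v, ε v ≠ 0 := fun v => by
    rw [hε]
    dsimp only
    split_ifs <;> norm_num
  have hadj : ∀ u v, G.Adj u v → ε v = - ε u := by
    intro u v huv
    have := c.valid huv
    rw [hε]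
    dsimp only
    generalize c u = a at this
    generalize c v = b at this
    fin_cases a <;> fin_cases b <;> simp_all
  have := hneg (-lam) (fun v => ε v * x v) (fun h0 => hx (by
    ext v
    simpa [hε0 v] using congrFun h0 v)) (fun u => by
    rw [show -lam * (ε u * x u) = -ε u * (lam * x u) by ring, ← h u, Finset.mul_sum]
    refine Finset.sum_congr rfl fun v _ => ?_
    split_ifs with huv
    · rw [hadj u v huv]
      ring
    · simp)
  linarith

/-- The double cover of `G` in which the two copies of the edge `e` are parallel or crossed
according to the sign `σ e`. -/
def SimpleGraph.signedLift (G : SimpleGraph V) (σ : Sym2 V → ℤˣ) : SimpleGraph (V × ℤˣ) where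
  Adj p q := G.Adj p.1 q.1 ∧ p.2 * q.2 = σ s(p.1, q.1)
  symm := ⟨fun p q h => ⟨h.1.symm, by rw [mul_comm, h.2, Sym2.eq_swap]⟩⟩
  loopless := ⟨fun p h => G.loopless.irrefl _ h.1⟩

theorem SimpleGraph.sum_signedLift {R : Type*} [AddCommMonoid R] (G : SimpleGraph V)
    (σ : Sym2 V → ℤˣ) (f : V × ℤˣ → R) (p : V × ℤˣ) :
    ∑ q, (if (G.signedLift σ).Adj p q then f q else 0) =
      ∑ v, if G.Adj p.1 v then f (v, p.2 * σ s(p.1, v)) else 0 := by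
  rw [Fintype.sum_prod_type]
  refine Finset.sum_congr rfl fun v _ => ?_
  have : ∀ b : ℤˣ, p.2 * b = σ s(p.1, v) ↔ b = p.2 * σ s(p.1, v) := fun b => by
    constructor
    · intro h
      rw [← h, ← mul_assoc, Int.units_mul_self, one_mul]
    · rintro rfl
      rw [← mul_assoc, Int.units_mul_self, one_mul]
  by_cases h : G.Adj p.1 v
  · simp only [SimpleGraph.signedLift, h, this, true_and, Finset.sum_ite_eq', Finset.mem_univ,
      if_true]
  · simp [SimpleGraph.signedLift, h]

theorem sub_apply_units_smul (f : ℤˣ → ℝ) (s : ℤˣ) :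
    f s - f (-s) = ((s : ℤ) : ℝ) * (f 1 - f (-1)) := by
  rcases Int.units_eq_one_or s with rfl | rfl <;> simp

theorem add_apply_units_smul (f : ℤˣ → ℝ) (s : ℤˣ) :
    f s + f (-s) = f 1 + f (-1) := by
  rcases Int.units_eq_one_or s with rfl | rfl
  · rfl
  · simp [add_comm]

theorem SimpleGraph.sum_signing_of_signedLift (G : SimpleGraph V) (σ : Sym2 V → ℤˣ) {lam : ℝ}
    {f : V × ℤˣ → ℝ}
    (h : ∀ p, ∑ q, (if (G.signedLift σ).Adj p q then f q else 0) = lam * f p) (u : V) :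
    ∑ v, (if G.Adj u v then ((σ s(u, v) : ℤ) : ℝ) * (f (v, 1) - f (v, -1)) else 0) =
      lam * (f (u, 1) - f (u, -1)) := by
  rw [mul_sub, ← h, ← h, G.sum_signedLift, G.sum_signedLift, ← Finset.sum_sub_distrib]
  refine Finset.sum_congr rfl fun v _ => ?_
  split_ifs
  · simpa using (sub_apply_units_smul (fun s => f (v, s)) (σ s(u, v))).symm
  · simp

theorem SimpleGraph.sum_of_signedLift (G : SimpleGraph V) (σ : Sym2 V → ℤˣ) {lam : ℝ}
    {f : V × ℤˣ → ℝ}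
    (h : ∀ p, ∑ q, (if (G.signedLift σ).Adj p q then f q else 0) = lam * f p) (u : V) :
    ∑ v, (if G.Adj u v then f (v, 1) + f (v, -1) else 0) = lam * (f (u, 1) + f (u, -1)) := by
  rw [mul_add, ← h, ← h, G.sum_signedLift, G.sum_signedLift, ← Finset.sum_add_distrib]
  refine Finset.sum_congr rfl fun v _ => ?_
  split_ifs
  · simpa using (add_apply_units_smul (fun s => f (v, s)) (σ s(u, v))).symm
  · simp

theorem SimpleGraph.card_adj_signedLift (G : SimpleGraph V) (σ : Sym2 V → ℤˣ) (p : V × ℤˣ) :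
    (Finset.univ.filter fun q => (G.signedLift σ).Adj p q).card =
      (Finset.univ.filter fun v => G.Adj p.1 v).card := by
  rw [Finset.card_filter, Finset.card_filter, G.sum_signedLift]

theorem SimpleGraph.connected_signedLift {G : SimpleGraph V} (hG : G.Connected) {k : ℕ}
    (hcard : ∀ u, (Finset.univ.filter fun v => G.Adj u v).card = k) {σ : Sym2 V → ℤˣ}
    (hσ : ∀ x : V → ℝ, (∀ u, ∑ v, (if G.Adj u v then ((σ s(u, v) : ℤ) : ℝ) * x v else 0) =
      k * x u) → x = 0) :
    (G.signedLift σ).Connected := by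
  have : Nonempty V := hG.nonempty
  refine (SimpleGraph.connected_iff _).mpr ⟨fun p => ?_, inferInstance⟩
  set f : V × ℤˣ → ℝ := fun q => if (G.signedLift σ).Reachable p q then 1 else 0 with hf
  have hfadj : ∀ q r, (G.signedLift σ).Adj q r → f r = f q := by
    intro q r h
    rw [hf]
    have : (G.signedLift σ).Reachable p r ↔ (G.signedLift σ).Reachable p q :=
      ⟨fun h' => h'.trans h.symm.reachable, fun h' => h'.trans h.reachable⟩
    simp only [this]
  have hfk : ∀ q, ∑ r, (if (G.signedLift σ).Adj q r then f r else 0) = k * f q := by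
    intro q
    rw [← hcard q.1, ← G.card_adj_signedLift σ q, Finset.card_filter, Nat.cast_sum,
      Finset.sum_mul]
    refine Finset.sum_congr rfl fun r _ => ?_
    split_ifs with h
    · simp [hfadj q r h]
    · simp
  have hz := hσ _ (G.sum_signing_of_signedLift σ hfk)
  have hsame : ∀ v (a b : ℤˣ), f (v, a) = f (v, b) := by
    intro v a b
    have h1 : f (v, 1) = f (v, -1) := sub_eq_zero.mp (congrFun hz v)
    rcases Int.units_eq_one_or a with rfl | rfl <;> rcases Int.units_eq_one_or b with rfl | rfl <;>
      simp [h1]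
  have hstep : ∀ u v, G.Adj u v → f (v, 1) = f (u, 1) := by
    intro u v huv
    have hadj : (G.signedLift σ).Adj (u, 1) (v, σ s(u, v)) := ⟨huv, one_mul _⟩
    rw [hsame v 1 (σ s(u, v)), hfadj _ _ hadj]
  intro q
  obtain ⟨w⟩ := hG.preconnected p.1 q.1
  have hwalk : ∀ u v, G.Walk u v → f (v, 1) = f (u, 1) := by
    intro u v w
    induction w with
    | nil => rfl
    | cons h _ ih => rw [ih, hstep _ _ h]
  have hfq : f q = 1 := by
    rw [← Prod.mk.eta (p := q), hsame _ _ 1, hwalk _ _ w, hsame _ _ p.2]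
    simp [hf]
  by_contra hq
  simp [hf, hq] at hfq

theorem SimpleGraph.IsBipartiteRamanujan.exists_lift {G : SimpleGraph V} {k : ℕ} (hk : 3 ≤ k)
    (hG : G.IsBipartiteRamanujan k) :
    ∃ G' : SimpleGraph (V × ℤˣ), G'.IsBipartiteRamanujan k := by
  obtain ⟨σ, hσ⟩ := G.exists_signing_abs_eigenvalue_le (by omega) hG.colorable hG.card_adj
  have hk' : (3 : ℝ) ≤ k := by exact_mod_cast hk
  have hlt : 2 * √((k : ℝ) - 1) < k := by
    have h1 := Real.sq_sqrt (show (0 : ℝ) ≤ k - 1 by linarith)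
    nlinarith [Real.sqrt_nonneg ((k : ℝ) - 1), sq_nonneg (√((k : ℝ) - 1) - 1)]
  refine ⟨G.signedLift σ, ?_, ?_, ?_, ?_⟩
  · refine connected_signedLift hG.connected hG.card_adj fun x hx => ?_
    by_contra h0
    have := hσ k x h0 hx
    rw [Nat.abs_cast] at this
    linarith
  · exact hG.colorable.of_hom (⟨Prod.fst, fun h => h.1⟩ : G.signedLift σ →g G)
  · intro p
    rw [card_adj_signedLift, hG.card_adj]
  · intro lam f hf h
    by_cases hy : (fun v => f (v, 1) + f (v, -1)) = 0
    · refine Or.inr (hσ lam (fun v => f (v, 1) - f (v, -1)) (fun hz => hf ?_)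
        (G.sum_signing_of_signedLift σ h))
      ext ⟨v, a⟩
      have h1 := congrFun hy v
      have h2 := congrFun hz v
      simp only [Pi.zero_apply] at h1 h2 ⊢
      rcases Int.units_eq_one_or a with rfl | rfl <;> linarith
    · exact hG.eigenvalue lam _ hy (G.sum_of_signedLift σ h)

end Lift

theorem completeBipartiteGraph_isBipartiteRamanujan {k : ℕ} (hk : 1 ≤ k) :
    (completeBipartiteGraph (Fin k) (Fin k)).IsBipartiteRamanujan k := by
  have hsum : ∀ (R : Type) [AddCommMonoid R] (f : Fin k ⊕ Fin k → R) (u : Fin k ⊕ Fin k),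
      ∑ v, (if (completeBipartiteGraph (Fin k) (Fin k)).Adj u v then f v else 0) =
        if u.isLeft then ∑ j, f (Sum.inr j) else ∑ j, f (Sum.inl j) := by
    intro R _ f u
    rw [Fintype.sum_sum_type]
    rcases u with u | u <;> simp [completeBipartiteGraph]
  have : NeZero k := ⟨by omega⟩
  refine ⟨?_, (SimpleGraph.CompleteBipartiteGraph.bicoloring _ _).colorable, fun u => ?_,
    fun lam x hx h => ?_⟩
  · refine (SimpleGraph.connected_iff _).mpr ⟨?_, ⟨Sum.inl 0⟩⟩
    have hlr : ∀ i j, (completeBipartiteGraph (Fin k) (Fin k)).Reachable (Sum.inl i) (Sum.inr j) :=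
      fun i j => SimpleGraph.Adj.reachable (by simp)
    rintro (i | i) (j | j)
    · exact (hlr i 0).trans (hlr j 0).symm
    · exact hlr i j
    · exact (hlr j i).symm
    · exact (hlr 0 i).symm.trans (hlr 0 j)
  · rw [Finset.card_filter, hsum]
    simp
  · by_cases h0 : lam = 0
    · right
      simp [h0]
    left
    have hl : ∀ i, ∑ j, x (Sum.inr j) = lam * x (Sum.inl i) := fun i => by
      simpa [hsum] using h (Sum.inl i)
    have hr : ∀ i, ∑ j, x (Sum.inl j) = lam * x (Sum.inr i) := fun i => by
      simpa [hsum] using h (Sum.inr i)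
    have hl' : k * ∑ j, x (Sum.inr j) = lam * ∑ j, x (Sum.inl j) := by
      rw [Finset.mul_sum _ _ lam, ← Finset.sum_congr rfl fun i _ => hl i]
      simp
    have hr' : k * ∑ j, x (Sum.inl j) = lam * ∑ j, x (Sum.inr j) := by
      rw [Finset.mul_sum _ _ lam, ← Finset.sum_congr rfl fun i _ => hr i]
      simp
    set a := ∑ j, x (Sum.inr j)
    set b := ∑ j, x (Sum.inl j)
    have hab : a ≠ 0 := by
      intro ha
      have hb : b = 0 := by
        rw [ha, mul_zero, eq_comm, mul_eq_zero] at hl'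
        exact hl'.resolve_left h0
      refine hx (funext ?_)
      rintro (i | i)
      · simpa [ha, h0, eq_comm] using hl i
      · simpa [hb, h0, eq_comm] using hr i
    have hsq : lam ^ 2 = (k : ℝ) ^ 2 := by
      refine mul_right_cancel₀ hab ?_
      linear_combination (-lam) * hr' - (k : ℝ) * hl'
    rw [← Nat.abs_cast k, ← sq_eq_sq_iff_abs_eq_abs, hsq]

theorem exists_isBipartiteRamanujan {k : ℕ} (hk : 3 ≤ k) (N : ℕ) :
    ∃ (V : Type) (_ : Fintype V) (G : SimpleGraph V),
      N < Fintype.card V ∧ G.IsBipartiteRamanujan k := by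
  induction N with
  | zero =>
    exact ⟨_, _, _, by simp; omega, completeBipartiteGraph_isBipartiteRamanujan (by omega)⟩
  | succ N ih =>
    obtain ⟨V, _, G, hN, hG⟩ := ih
    obtain ⟨G', hG'⟩ := hG.exists_lift hk
    refine ⟨_, _, G', ?_, hG'⟩
    rw [Fintype.card_prod, Fintype.card_units_int]
    omega

/-- **Marcus–Spielman–Srivastava**: for every `k ≥ 3` there exist infinitely many
finite connected bipartite `k`-regular Ramanujan graphs. -/
theorem exists_bipartite_ramanujan (k : ℕ) (hk : 3 ≤ k) (N : ℕ) :
    ∃ (n : ℕ) (G : SimpleGraph (Fin n)),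
      n > N ∧ G.Connected ∧ G.Colorable 2 ∧ G.IsRegularOfDegree k ∧
      ∀ lam : ℝ, (∃ x : Fin n → ℝ, x ≠ 0 ∧ G.adjMatrix ℝ *ᵥ x = lam • x) →
        |lam| = (k : ℝ) ∨ |lam| ≤ 2 * Real.sqrt ((k : ℝ) - 1) := by
  obtain ⟨V, _, G, hN, hG⟩ := exists_isBipartiteRamanujan hk N
  obtain ⟨H, ⟨ι⟩⟩ : ∃ H : SimpleGraph (Fin (Fintype.card V)), Nonempty (G ≃g H) :=
    ⟨_, ⟨SimpleGraph.Iso.map (Fintype.equivFin V) G⟩⟩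
  have hadj : ∀ u v, H.Adj (ι u) (ι v) ↔ G.Adj u v := fun u v => ι.map_adj_iff
  refine ⟨Fintype.card V, H, hN, ι.connected_iff.mp hG.connected,
    hG.colorable.of_hom ι.symm.toHom, fun u => ?_, ?_⟩
  · obtain ⟨v, rfl⟩ := ι.surjective u
    rw [← hG.card_adj v, ← SimpleGraph.card_neighborFinset_eq_degree]
    refine (Finset.card_bij (fun w _ => ι w) ?_ ?_ ?_).symm
    · intro w hw
      simpa [hadj] using hw
    · intro w _ w' _ h
      exact ι.injective h
    · intro w hw
      obtain ⟨w, rfl⟩ := ι.surjective w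
      exact ⟨w, by simpa [hadj] using hw, rfl⟩
  · rintro lam ⟨x, hx, h⟩
    refine hG.eigenvalue lam (x ∘ ι) (fun h0 => hx (funext fun u => ?_)) fun u => ?_
    · obtain ⟨v, rfl⟩ := ι.surjective u
      exact congrFun h0 v
    · have := congrFun h (ι u)
      rw [Matrix.mulVec, dotProduct, ← ι.toEquiv.sum_comp] at this
      simpa [SimpleGraph.adjMatrix_apply, hadj] using this
end
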